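/- There is an absolute constant C > 0 such that for all real x ≥ 2, the number of ordered pairs of primes (p, q) with lcm(p−1, q−1) ≤ x is at most C·x. Equivalently, S_2(x) := (1/x)·Σ_{lcm(p−1,q−1) ≤ x} 1 ≤ C, where the sum is over ordered pairs of primes (p, q). -/

import Mathlib

open Filter Real

/-
Write `p - 1 = d * a` and `q - 1 = d * b` with `d = gcd (p - 1) (q - 1)`, so that the least common
multiple is `d * a * b`, and assume `a < b`. Fix the two smallest of `d, a, b` and sieve for the
largest: it runs over an interval of length `N ≥ X ^ (1 / 3)`, and two linear forms (if it is `d`)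
or one linear form (if it is `b`) have to be prime, which saves `(log X) ^ 2` or `log X`.
Summing over the remaining pair gives these logarithms back: in the first case from
`∑ 1 / (a * b)`, in the second from `∑ 1 / (d * a)` restricted to `d * a + 1` prime, which a further
application of the sieve on dyadic blocks bounds by `log X`. The singular factors
`∏ (1 + κ / p)` are bounded on average.

The sieve is of large sieve type: for squarefree `q` the product over `p ∣ q` of the normalised,
centred indicators of the sifted residue classes mod `p` has the same value at all sifted integers,
and products for different `q` are almost orthogonal over an interval. Bessel's inequality gives
the bound.
-/

section PeriodicSums

open Finset

theorem sum_range_mul_of_coprime {R : Type*} [CommSemiring R] {a b : ℕ} (hab : a.Coprime b)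
    {F G : ℕ → R} (hF : F.Periodic a) (hG : G.Periodic b) :
    ∑ n ∈ range (a * b), F n * G n = (∑ n ∈ range a, F n) * ∑ n ∈ range b, G n := by
  rcases a.eq_zero_or_pos with rfl | ha
  · simp
  rcases b.eq_zero_or_pos with rfl | hb
  · simp
  have hinj : Set.InjOn (fun n : ℕ ↦ (n % a, n % b)) (range (a * b) : Set ℕ) := by
    intro m hm n hn hmn
    simp only [coe_range, Set.mem_Iio, Prod.mk.injEq] at hm hn hmn
    exact ((Nat.modEq_and_modEq_iff_modEq_mul hab).1 hmn).eq_of_lt_of_lt hm hn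
  have himage : (range (a * b)).image (fun n : ℕ ↦ (n % a, n % b)) = range a ×ˢ range b := by
    refine eq_of_subset_of_card_le (image_subset_iff.2 fun n _ ↦ ?_) ?_
    · simp [Nat.mod_lt, ha, hb]
    · rw [card_image_of_injOn hinj, card_product, card_range, card_range, card_range]
  rw [sum_mul_sum, ← sum_product', ← himage, sum_image hinj]
  simp only [hF.map_mod_nat, hG.map_mod_nat]

theorem periodic_of_dvd {R : Type*} {f : ℕ → R} {a m : ℕ} (hf : f.Periodic a) (ham : a ∣ m) :
    f.Periodic m := by
  obtain ⟨c, rfl⟩ := ham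
  simpa [mul_comm] using hf.nat_mul c

theorem sum_range_prod_of_pairwise_coprime {ι R : Type*} [CommSemiring R] (s : Finset ι)
    {m : ι → ℕ} (hm : (s : Set ι).Pairwise fun i j ↦ (m i).Coprime (m j)) {g : ι → ℕ → R}
    (hg : ∀ i ∈ s, (g i).Periodic (m i)) :
    ∑ n ∈ range (∏ i ∈ s, m i), ∏ i ∈ s, g i n = ∏ i ∈ s, ∑ n ∈ range (m i), g i n := by
  classical
  induction s using Finset.induction_on with
  | empty => simp
  | insert j s hj ih =>
    rw [coe_insert, Set.pairwise_insert_of_notMem (by simpa using hj)] at hm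
    have hgs : ∀ i ∈ s, (g i).Periodic (m i) := fun i hi ↦ hg i (mem_insert_of_mem hi)
    have hper : Function.Periodic (fun n ↦ ∏ i ∈ s, g i n) (∏ i ∈ s, m i) := by
      simpa only [prod_fn] using
        periodic_prod s fun i hi ↦ periodic_of_dvd (hgs i hi) (dvd_prod_of_mem m hi)
    simp_rw [prod_insert hj]
    rw [← ih hm.1 hgs, sum_range_mul_of_coprime (Nat.Coprime.prod_right fun i hi ↦ (hm.2 i hi).1)
      (hg j (mem_insert_self j s)) hper]

theorem sum_range_mul_of_periodic {R : Type*} [Semiring R] {f : ℕ → R} {m : ℕ}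
    (hf : f.Periodic m) (t : ℕ) :
    ∑ n ∈ range (m * t), f n = t * ∑ n ∈ range m, f n := by
  induction t with
  | zero => simp
  | succ t ih =>
    have hshift : ∀ n, f (m * t + n) = f n := fun n ↦ by
      rw [add_comm]; exact periodic_of_dvd hf (dvd_mul_right m t) n
    rw [Nat.mul_succ, sum_range_add, ih]
    simp only [hshift]
    push_cast
    rw [add_one_mul]

theorem sum_range_le_of_periodic {f : ℕ → ℝ} {m : ℕ} (hm : 0 < m) (hf : f.Periodic m) {B : ℝ}
    (hB : ∀ n, |f n| ≤ B) (hsum : 0 ≤ ∑ n ∈ range m, f n) (N : ℕ) :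
    ∑ n ∈ range N, f n ≤ N / m * ∑ n ∈ range m, f n + m * B := by
  conv_lhs => rw [← Nat.div_add_mod N m]
  rw [sum_range_add, sum_range_mul_of_periodic hf]
  gcongr
  · exact Nat.cast_div_le
  · calc ∑ n ∈ range (N % m), f (m * (N / m) + n)
        ≤ ∑ _n ∈ range (N % m), B := sum_le_sum fun n _ ↦ (le_abs_self _).trans (hB _)
      _ = (N % m : ℕ) * B := by simp
      _ ≤ m * B := by
        have hB0 : 0 ≤ B := (abs_nonneg _).trans (hB 0)
        gcongr
        exact (Nat.mod_lt N hm).le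

end PeriodicSums

section Sieve

open Finset

variable (Z : ∀ p : ℕ, Finset (ZMod p))

/-- The ratio `ω(p) / (p - ω(p))` of forbidden to allowed residue classes modulo `p`, where `Z p`
is the set of forbidden classes and `ω(p)` its cardinality. -/
noncomputable def residueRatio (p : ℕ) : ℝ := #(Z p) / (p - #(Z p))

/-- The sieve density `h(q) = ∏_{p ∣ q} ω(p) / (p - ω(p))` attached to forbidden classes `Z p`. -/
noncomputable def sieveDensity (q : ℕ) : ℝ := ∏ p ∈ q.primeFactors, residueRatio Z p

/-- The weight of `n` at the prime `p`: it is `-1` on the forbidden classes and constant on the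
allowed ones, the constant being chosen so that the sum over a period vanishes. -/
noncomputable def localWeight (p n : ℕ) : ℝ := if (n : ZMod p) ∈ Z p then -1 else residueRatio Z p

/-- The weight `w_q(n) = ∏_{p ∣ q} w_p(n)`, equal to the sieve density of `q` when `n` avoids the
forbidden classes modulo every prime factor of `q`. -/
noncomputable def sieveWeight (q n : ℕ) : ℝ := ∏ p ∈ q.primeFactors, localWeight Z p n

variable {Z} {p : ℕ}

theorem residueRatio_nonneg (hp : #(Z p) < p) : 0 ≤ residueRatio Z p :=
  div_nonneg (Nat.cast_nonneg _) (sub_nonneg.2 (by exact_mod_cast hp.le))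

theorem sieveDensity_nonneg {q : ℕ} (hZ : ∀ p ∈ q.primeFactors, #(Z p) < p) :
    0 ≤ sieveDensity Z q :=
  prod_nonneg fun p hp ↦ residueRatio_nonneg (hZ p hp)

theorem localWeight_periodic (p : ℕ) : (localWeight Z p).Periodic p := fun n ↦ by
  simp only [localWeight, Nat.cast_add, CharP.cast_eq_zero, add_zero]

theorem abs_localWeight_le (hp : #(Z p) < p) : ∀ n, |localWeight Z p n| ≤ p := fun n ↦ by
  have hgap : (1 : ℝ) ≤ p - #(Z p) := by
    have : (#(Z p) : ℝ) + 1 ≤ p := by exact_mod_cast hp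
    linarith
  have hcard : (#(Z p) : ℝ) ≤ p := by exact_mod_cast hp.le
  unfold localWeight
  split_ifs
  · rw [abs_neg, abs_one]
    exact_mod_cast Nat.one_le_of_lt hp
  · rw [abs_of_nonneg (residueRatio_nonneg hp)]
    exact (div_le_self (Nat.cast_nonneg _) hgap).trans hcard

theorem card_filter_range_cast_mem [NeZero p] (A : Finset (ZMod p)) :
    #{n ∈ range p | ((n : ℕ) : ZMod p) ∈ A} = #A := by
  refine card_nbij' (Nat.cast : ℕ → ZMod p) ZMod.val ?_ ?_ ?_ ?_
  · exact fun n hn ↦ (mem_filter.1 hn).2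
  · intro z hz
    simpa [ZMod.val_lt] using hz
  · exact fun n hn ↦ ZMod.val_cast_of_lt (mem_range.1 (mem_filter.1 hn).1)
  · exact fun z _ ↦ ZMod.natCast_zmod_val z

theorem sum_range_ite_cast_mem [NeZero p] (A : Finset (ZMod p)) (a b : ℝ) :
    ∑ n ∈ range p, (if (n : ZMod p) ∈ A then a else b) = #A * a + (p - #A) * b := by
  have hcompl : (#{n ∈ range p | ((n : ℕ) : ZMod p) ∉ A} : ℝ) = p - #A := by
    rw [eq_sub_iff_add_eq', ← card_filter_range_cast_mem A]
    exact_mod_cast (card_filter_add_card_filter_not _).trans (card_range p)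
  rw [sum_ite, sum_const, sum_const, card_filter_range_cast_mem, nsmul_eq_mul, nsmul_eq_mul,
    hcompl]

theorem sum_localWeight (hp : #(Z p) < p) : ∑ n ∈ range p, localWeight Z p n = 0 := by
  have : NeZero p := ⟨hp.ne_bot⟩
  have hgap : (p : ℝ) - #(Z p) ≠ 0 := sub_ne_zero.2 (by exact_mod_cast hp.ne')
  simp only [localWeight]
  rw [sum_range_ite_cast_mem, residueRatio]
  field_simp
  ring

theorem sum_localWeight_sq (hp : #(Z p) < p) :
    ∑ n ∈ range p, localWeight Z p n ^ 2 = p * residueRatio Z p := by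
  have : NeZero p := ⟨hp.ne_bot⟩
  have hgap : (p : ℝ) - #(Z p) ≠ 0 := sub_ne_zero.2 (by exact_mod_cast hp.ne')
  simp only [localWeight, ite_pow]
  rw [sum_range_ite_cast_mem, residueRatio]
  field_simp
  ring

variable {q r : ℕ}

theorem abs_sieveWeight_le (hq : q ≠ 0) (hZ : ∀ p ∈ q.primeFactors, #(Z p) < p) (n : ℕ) :
    |sieveWeight Z q n| ≤ q :=
  calc |sieveWeight Z q n| = ∏ p ∈ q.primeFactors, |localWeight Z p n| := abs_prod _ _
    _ ≤ ∏ p ∈ q.primeFactors, (p : ℝ) :=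
      prod_le_prod (fun _ _ ↦ abs_nonneg _) fun p hp ↦ abs_localWeight_le (hZ p hp) n
    _ ≤ q := by
      rw [← Nat.cast_prod]
      exact_mod_cast Nat.le_of_dvd (Nat.pos_of_ne_zero hq) (Nat.prod_primeFactors_dvd q)

theorem sieveWeight_eq_sieveDensity {n : ℕ} (hn : ∀ p ∈ q.primeFactors, (n : ZMod p) ∉ Z p) :
    sieveWeight Z q n = sieveDensity Z q :=
  prod_congr rfl fun p hp ↦ if_neg (hn p hp)

theorem sieveWeight_periodic {m : ℕ} (hm : ∀ p ∈ q.primeFactors, p ∣ m) :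
    (sieveWeight Z q).Periodic m := by
  unfold sieveWeight
  simpa only [prod_fn] using
    periodic_prod q.primeFactors fun p hp ↦ periodic_of_dvd (localWeight_periodic p) (hm p hp)

theorem primeFactors_injOn_squarefree : Set.InjOn Nat.primeFactors {q | Squarefree q} := by
  intro q hq r hr hqr
  rw [← Nat.prod_primeFactors_of_squarefree hq, hqr, Nat.prod_primeFactors_of_squarefree hr]

theorem sieveWeight_mul_sieveWeight (n : ℕ) :
    sieveWeight Z q n * sieveWeight Z r n = ∏ p ∈ q.primeFactors ∪ r.primeFactors,
      (if p ∈ q.primeFactors then localWeight Z p n else 1) *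
        (if p ∈ r.primeFactors then localWeight Z p n else 1) := by
  rw [prod_mul_distrib, prod_ite_mem, prod_ite_mem, inter_eq_right.2 subset_union_left,
    inter_eq_right.2 subset_union_right, sieveWeight, sieveWeight]

theorem sum_local_factor {s t : Finset ℕ} (hp : p ∈ s ∪ t) (hZ : #(Z p) < p) :
    ∑ n ∈ range p, (if p ∈ s then localWeight Z p n else 1) *
        (if p ∈ t then localWeight Z p n else 1)
      = if p ∈ s ∩ t then p * residueRatio Z p else 0 := by
  by_cases hs : p ∈ s <;> by_cases ht : p ∈ t
  · simp only [hs, ht, if_true, mem_inter, and_self, ← sq, sum_localWeight_sq hZ]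
  · simp [hs, ht, sum_localWeight hZ]
  · simp [hs, ht, sum_localWeight hZ]
  · simp [hs, ht] at hp

theorem sum_sieveWeight_mul_period (hq : Squarefree q) (hr : Squarefree r)
    (hZ : ∀ p ∈ q.primeFactors ∪ r.primeFactors, #(Z p) < p) :
    ∑ n ∈ range (∏ p ∈ q.primeFactors ∪ r.primeFactors, p), sieveWeight Z q n * sieveWeight Z r n
      = if q = r then q * sieveDensity Z q else 0 := by
  have hcoprime : ((q.primeFactors ∪ r.primeFactors : Finset ℕ) : Set ℕ).Pairwise Nat.Coprime := by
    intro p hp p' hp' hne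
    simp only [coe_union, Set.mem_union, mem_coe] at hp hp'
    exact (Nat.coprime_primes (hp.elim Nat.prime_of_mem_primeFactors Nat.prime_of_mem_primeFactors)
      (hp'.elim Nat.prime_of_mem_primeFactors Nat.prime_of_mem_primeFactors)).2 hne
  simp_rw [sieveWeight_mul_sieveWeight]
  rw [sum_range_prod_of_pairwise_coprime _ hcoprime fun p _ n ↦ by
      simp only [localWeight_periodic p n],
    prod_congr rfl fun p hp ↦ sum_local_factor hp (hZ p hp)]
  split_ifs with hqr
  · subst hqr
    rw [union_self, inter_self, prod_congr rfl fun p hp ↦ if_pos hp, prod_mul_distrib,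
      sieveDensity, ← Nat.cast_prod, Nat.prod_primeFactors_of_squarefree hq]
  · have hne : q.primeFactors ∪ r.primeFactors ≠ q.primeFactors ∩ r.primeFactors :=
      fun h ↦ hqr (primeFactors_injOn_squarefree hq hr (sup_eq_inf.1 h))
    obtain ⟨p, hp, hp'⟩ := exists_of_ssubset (inter_subset_union.ssubset_of_ne hne.symm)
    exact prod_eq_zero hp (if_neg hp')

theorem sum_sieveWeight_mul_le {Q : ℕ} (hq : Squarefree q) (hr : Squarefree r) (hqQ : q ≤ Q)
    (hrQ : r ≤ Q) (hZ : ∀ p ∈ q.primeFactors ∪ r.primeFactors, #(Z p) < p) (N : ℕ) :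
    ∑ n ∈ range N, sieveWeight Z q n * sieveWeight Z r n
      ≤ (if q = r then N * sieveDensity Z q else 0) + (Q : ℝ) ^ 4 := by
  set m := ∏ p ∈ q.primeFactors ∪ r.primeFactors, p with hm
  have hZq : ∀ p ∈ q.primeFactors, #(Z p) < p := fun p hp ↦ hZ p (mem_union_left _ hp)
  have hZr : ∀ p ∈ r.primeFactors, #(Z p) < p := fun p hp ↦ hZ p (mem_union_right _ hp)
  have hdvd : ∀ p ∈ q.primeFactors ∪ r.primeFactors, p ∣ m := fun p hp ↦ dvd_prod_of_mem _ hp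
  have hmqr : m ∣ q * r := by
    rw [hm, ← Nat.primeFactors_mul hq.ne_zero hr.ne_zero]
    exact Nat.prod_primeFactors_dvd _
  have hqr : 0 < q * r := Nat.pos_of_ne_zero (mul_ne_zero hq.ne_zero hr.ne_zero)
  have hm0 : 0 < m := Nat.pos_of_dvd_of_pos hmqr hqr
  have hqrQ : (q : ℝ) * r ≤ Q * Q := by gcongr
  have hmQ : (m : ℝ) ≤ Q * Q := hqrQ.trans' (by exact_mod_cast Nat.le_of_dvd hqr hmqr)
  have hbound : ∀ n, |sieveWeight Z q n * sieveWeight Z r n| ≤ Q * Q := fun n ↦ by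
    rw [abs_mul]
    refine hqrQ.trans' ?_
    gcongr
    exacts [abs_sieveWeight_le hq.ne_zero hZq n, abs_sieveWeight_le hr.ne_zero hZr n]
  have hperiodic : Function.Periodic (fun n ↦ sieveWeight Z q n * sieveWeight Z r n) m :=
    (sieveWeight_periodic fun p hp ↦ hdvd p (mem_union_left _ hp)).mul
      (sieveWeight_periodic fun p hp ↦ hdvd p (mem_union_right _ hp))
  have hperiod := sum_sieveWeight_mul_period hq hr hZ
  have hnonneg : 0 ≤ ∑ n ∈ range m, sieveWeight Z q n * sieveWeight Z r n := by
    rw [hperiod]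
    split_ifs
    exacts [mul_nonneg (Nat.cast_nonneg q) (sieveDensity_nonneg hZq), le_rfl]
  refine (sum_range_le_of_periodic hm0 hperiodic hbound hnonneg N).trans (add_le_add ?_ ?_)
  · rw [hperiod]
    split_ifs with h
    · have hmq : m = q := by
        rw [hm, ← h, union_self, Nat.prod_primeFactors_of_squarefree hq]
      rw [hmq, ← mul_assoc, div_mul_cancel₀ _ (Nat.cast_ne_zero.2 hq.ne_zero)]
    · rw [mul_zero]
  · calc (m : ℝ) * (Q * Q) ≤ Q * Q * (Q * Q) := by gcongr
      _ = Q ^ 4 := by ring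

theorem sum_sq_sum_sieveWeight_le {D : Finset ℕ} {Q : ℕ}
    (hD : ∀ q ∈ D, Squarefree q ∧ q ≤ Q ∧ ∀ p ∈ q.primeFactors, #(Z p) < p) (N : ℕ) :
    ∑ n ∈ range N, (∑ q ∈ D, sieveWeight Z q n) ^ 2
      ≤ N * ∑ q ∈ D, sieveDensity Z q + (Q : ℝ) ^ 6 := by
  have hcard : (#D : ℝ) ≤ Q := by
    have hsub : D ⊆ Icc 1 Q := fun q hq ↦
      mem_Icc.2 ⟨Nat.pos_of_ne_zero (hD q hq).1.ne_zero, (hD q hq).2.1⟩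
    exact_mod_cast (card_le_card hsub).trans (Nat.card_Icc 1 Q).le
  calc ∑ n ∈ range N, (∑ q ∈ D, sieveWeight Z q n) ^ 2
      = ∑ q ∈ D, ∑ r ∈ D, ∑ n ∈ range N, sieveWeight Z q n * sieveWeight Z r n := by
        simp_rw [sq, sum_mul_sum]
        rw [sum_comm]
        exact sum_congr rfl fun q _ ↦ sum_comm
    _ ≤ ∑ q ∈ D, ∑ r ∈ D, ((if q = r then N * sieveDensity Z q else 0) + (Q : ℝ) ^ 4) := by
        refine sum_le_sum fun q hq ↦ sum_le_sum fun r hr ↦ ?_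
        obtain ⟨hqsq, hqQ, hqZ⟩ := hD q hq
        obtain ⟨hrsq, hrQ, hrZ⟩ := hD r hr
        exact sum_sieveWeight_mul_le hqsq hrsq hqQ hrQ
          (fun p hp ↦ (mem_union.1 hp).elim (hqZ p) (hrZ p)) N
    _ = N * ∑ q ∈ D, sieveDensity Z q + #D * #D * (Q : ℝ) ^ 4 := by
        simp only [sum_add_distrib, sum_ite_eq, sum_const, nsmul_eq_mul, mul_sum, mul_assoc]
        congr 1
        exact sum_congr rfl fun q hq ↦ if_pos hq
    _ ≤ N * ∑ q ∈ D, sieveDensity Z q + Q * Q * (Q : ℝ) ^ 4 := by gcongr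
    _ = N * ∑ q ∈ D, sieveDensity Z q + (Q : ℝ) ^ 6 := by ring

theorem card_mul_sum_sieveDensity_le {D S : Finset ℕ} {Q N : ℕ}
    (hD : ∀ q ∈ D, Squarefree q ∧ q ≤ Q ∧ ∀ p ∈ q.primeFactors, #(Z p) < p) (hone : 1 ∈ D)
    (hS : ∀ n ∈ S, n < N ∧ ∀ q ∈ D, ∀ p ∈ q.primeFactors, (n : ZMod p) ∉ Z p) :
    #S * ∑ q ∈ D, sieveDensity Z q ≤ N + (Q : ℝ) ^ 6 := by
  set L := ∑ q ∈ D, sieveDensity Z q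
  have hL1 : 1 ≤ L := by
    have hle := single_le_sum (fun q hq ↦ sieveDensity_nonneg (hD q hq).2.2) hone
    rwa [sieveDensity, Nat.primeFactors_one, prod_empty] at hle
  have hsum : ∀ n ∈ S, ∑ q ∈ D, sieveWeight Z q n = L := fun n hn ↦
    sum_congr rfl fun q hq ↦ sieveWeight_eq_sieveDensity ((hS n hn).2 q hq)
  have hchain : #S * L * L ≤ (N + (Q : ℝ) ^ 6) * L :=
    calc #S * L * L = ∑ n ∈ S, (∑ q ∈ D, sieveWeight Z q n) ^ 2 := by
          rw [sum_congr rfl fun n hn ↦ congrArg (· ^ 2) (hsum n hn), sum_const, nsmul_eq_mul]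
          ring
      _ ≤ ∑ n ∈ range N, (∑ q ∈ D, sieveWeight Z q n) ^ 2 :=
          sum_le_sum_of_subset_of_nonneg (fun n hn ↦ mem_range.2 (hS n hn).1)
            fun _ _ _ ↦ sq_nonneg _
      _ ≤ N * L + (Q : ℝ) ^ 6 := sum_sq_sum_sieveWeight_le hD N
      _ ≤ N * L + (Q : ℝ) ^ 6 * L := by
          gcongr
          exact le_mul_of_one_le_right (by positivity) hL1
      _ = (N + (Q : ℝ) ^ 6) * L := by ring
  exact le_of_mul_le_mul_right hchain (one_pos.trans_le hL1)

end Sieve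

section SumsOverDivisors

open Finset

theorem sum_le_sum_of_injOn {ι κ : Type*} {s : Finset ι} {t : Finset κ} {f : ι → ℝ} {g : κ → ℝ}
    (i : ι → κ) (hmaps : Set.MapsTo i s t) (hinj : Set.InjOn i s) (hfg : ∀ a ∈ s, f a ≤ g (i a))
    (hg : ∀ b ∈ t, 0 ≤ g b) : ∑ a ∈ s, f a ≤ ∑ b ∈ t, g b := by
  classical
  calc ∑ a ∈ s, f a ≤ ∑ a ∈ s, g (i a) := sum_le_sum hfg
    _ = ∑ b ∈ s.image i, g b := (sum_image hinj).symm
    _ ≤ ∑ b ∈ t, g b :=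
      sum_le_sum_of_subset_of_nonneg (image_subset_iff.2 hmaps) fun b hb _ ↦ hg b hb

theorem sum_sum_divisors_le {F : ℕ → ℕ → ℝ} (hF : ∀ d m, 0 ≤ F d m) (N : ℕ) :
    ∑ n ∈ Icc 1 N, ∑ d ∈ n.divisors, F d (n / d) ≤ ∑ d ∈ Icc 1 N, ∑ m ∈ Icc 1 N, F d m := by
  rw [← sum_product', sum_sigma']
  refine sum_le_sum_of_injOn (fun z ↦ (z.2, z.1 / z.2)) ?_ ?_ (fun _ _ ↦ le_rfl)
    fun _ _ ↦ hF _ _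
  · rintro ⟨n, d⟩ hz
    simp only [coe_sigma, Set.mem_sigma_iff, mem_coe, mem_Icc, Nat.mem_divisors] at hz
    obtain ⟨⟨hn, hnN⟩, hd, -⟩ := hz
    have hdn : d ≤ n := Nat.le_of_dvd hn hd
    have hd0 : 0 < d := Nat.pos_of_dvd_of_pos hd hn
    simp only [coe_product, Set.mem_prod, mem_coe, mem_Icc]
    exact ⟨⟨hd0, hdn.trans hnN⟩, Nat.div_pos hdn hd0, (Nat.div_le_self n d).trans hnN⟩
  · rintro ⟨n, d⟩ hz ⟨n', d'⟩ hz' h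
    simp only [coe_sigma, Set.mem_sigma_iff, mem_coe, Nat.mem_divisors] at hz hz'
    obtain ⟨rfl, hdiv⟩ := Prod.mk.inj h
    obtain rfl : n = n' := by
      rw [← Nat.mul_div_cancel' hz.2.1, hdiv, Nat.mul_div_cancel' hz'.2.1]
    rfl

theorem sum_squarefree_divisors_prod {R : Type*} [CommSemiring R] {n : ℕ} (hn : n ≠ 0)
    (f : ℕ → R) :
    ∑ e ∈ n.divisors with Squarefree e, ∏ p ∈ e.primeFactors, f p
      = ∏ p ∈ n.primeFactors, (1 + f p) := by
  rw [Nat.sum_divisors_filter_squarefree hn, prod_one_add, Nat.factors_eq]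
  refine sum_congr rfl fun s hs ↦ ?_
  have hprod : s.val.prod = ∏ p ∈ s, p := prod_val s
  rw [hprod, Nat.primeFactors_prod fun p hp ↦ Nat.prime_of_mem_primeFactorsList
    (List.mem_toFinset.1 (mem_powerset.1 hs hp))]

theorem sum_squarefree_prod_le_exp {f : ℕ → ℝ} (hf : ∀ p, 0 ≤ f p) (N : ℕ) :
    ∑ e ∈ Icc 1 N with Squarefree e, ∏ p ∈ e.primeFactors, f p ≤ exp (∑ p ∈ Icc 1 N, f p) := by
  have hN : N.factorial ≠ 0 := N.factorial_ne_zero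
  have hdivisors : {e ∈ Icc 1 N | Squarefree e} ⊆ {e ∈ N.factorial.divisors | Squarefree e} := by
    refine filter_subset_filter _ fun e he ↦ Nat.mem_divisors.2 ⟨?_, hN⟩
    exact Nat.dvd_factorial (mem_Icc.1 he).1 (mem_Icc.1 he).2
  have hprimes : N.factorial.primeFactors ⊆ Icc 1 N := fun p hp ↦
    have hpp := Nat.prime_of_mem_primeFactors hp
    mem_Icc.2 ⟨hpp.one_le, hpp.dvd_factorial.1 (Nat.dvd_of_mem_primeFactors hp)⟩
  calc ∑ e ∈ Icc 1 N with Squarefree e, ∏ p ∈ e.primeFactors, f p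
      ≤ ∑ e ∈ N.factorial.divisors with Squarefree e, ∏ p ∈ e.primeFactors, f p :=
        sum_le_sum_of_subset_of_nonneg hdivisors fun _ _ _ ↦ prod_nonneg fun p _ ↦ hf p
    _ = ∏ p ∈ N.factorial.primeFactors, (1 + f p) := sum_squarefree_divisors_prod hN f
    _ ≤ ∏ p ∈ N.factorial.primeFactors, exp (f p) := by
        refine prod_le_prod (fun p _ ↦ by linarith [hf p]) fun p _ ↦ ?_
        rw [add_comm]
        exact add_one_le_exp (f p)
    _ = exp (∑ p ∈ N.factorial.primeFactors, f p) := (exp_sum _ _).symm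
    _ ≤ exp (∑ p ∈ Icc 1 N, f p) :=
        exp_le_exp.2 (sum_le_sum_of_subset_of_nonneg hprimes fun p _ _ ↦ hf p)

theorem prod_primeFactors_add_of_squarefree {n : ℕ} (hn : Squarefree n) (f g : ℕ → ℝ) :
    ∏ p ∈ n.primeFactors, (f p + g p) = ∑ x ∈ n.divisorsAntidiagonal,
      (∏ p ∈ x.1.primeFactors, f p) * ∏ p ∈ x.2.primeFactors, g p := by
  have hadd := ArithmeticFunction.IsMultiplicative.prodPrimeFactors_add_of_squarefree
    (ArithmeticFunction.IsMultiplicative.prodPrimeFactors f)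
    (ArithmeticFunction.IsMultiplicative.prodPrimeFactors g) hn
  rw [ArithmeticFunction.prodPrimeFactors_apply hn.ne_zero, ArithmeticFunction.mul_apply] at hadd
  have hprime : ∀ (h : ℕ → ℝ), ∀ p ∈ n.primeFactors,
      ArithmeticFunction.prodPrimeFactors h p = h p := fun h p hp ↦ by
    have hpp := Nat.prime_of_mem_primeFactors hp
    rw [ArithmeticFunction.prodPrimeFactors_apply hpp.ne_zero, hpp.primeFactors, prod_singleton]
  rw [prod_congr rfl fun p hp ↦ by rw [← hprime f p hp, ← hprime g p hp]]
  refine hadd.trans (sum_congr rfl fun x hx ↦ ?_)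
  rw [ArithmeticFunction.prodPrimeFactors_apply (Nat.ne_zero_of_mem_divisorsAntidiagonal hx).1,
    ArithmeticFunction.prodPrimeFactors_apply (Nat.ne_zero_of_mem_divisorsAntidiagonal hx).2]

theorem sum_one_div_sq_le_two (N : ℕ) : ∑ n ∈ Icc 1 N, (1 : ℝ) / (n : ℝ) ^ 2 ≤ 2 := by
  have hIoo : Icc 1 N = Ioo 0 (N + 1) := by ext; simp; omega
  simpa [hIoo] using sum_Ioo_inv_sq_le (α := ℝ) 0 (N + 1)

theorem sum_one_div_le_one_add_log (N : ℕ) : ∑ n ∈ Icc 1 N, (1 : ℝ) / n ≤ 1 + log N := by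
  simpa [harmonic_eq_sum_Icc] using harmonic_le_one_add_log N

theorem log_add_one_le_sum_one_div (N : ℕ) : log (N + 1) ≤ ∑ n ∈ Icc 1 N, (1 : ℝ) / n := by
  simpa [harmonic_eq_sum_Icc] using log_add_one_le_harmonic N

end SumsOverDivisors

section EulerFactors

open Finset

/-- The multiplicative weight `c_κ(n) = ∏_{p ∣ n} κ / p`, the size of the density of a sieve of
dimension `κ`. -/
noncomputable def primeWeight (κ : ℝ) (n : ℕ) : ℝ := ∏ p ∈ n.primeFactors, κ / p

/-- The singular factor `G_κ(n) = ∏_{p ∣ n} (1 + κ / p)`, the loss a sieve of dimension `κ` suffers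
when the primes dividing `n` are discarded. -/
noncomputable def eulerFactor (κ : ℝ) (n : ℕ) : ℝ := ∏ p ∈ n.primeFactors, (1 + κ / p)

/-- The partial sum `M_κ(N) = ∑ c_κ(q)` over squarefree `q ≤ N`, the denominator of a sieve of
dimension `κ` and level `N`. -/
noncomputable def squarefreeSum (κ : ℝ) (N : ℕ) : ℝ :=
  ∑ q ∈ Icc 1 N with Squarefree q, primeWeight κ q

variable {κ μ : ℝ} {m n : ℕ}

theorem primeWeight_nonneg (hκ : 0 ≤ κ) (n : ℕ) : 0 ≤ primeWeight κ n :=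
  prod_nonneg fun _ _ ↦ by positivity

theorem squarefreeSum_nonneg (hκ : 0 ≤ κ) (N : ℕ) : 0 ≤ squarefreeSum κ N :=
  sum_nonneg fun q _ ↦ primeWeight_nonneg hκ q

theorem primeWeight_mul_of_coprime (hmn : m.Coprime n) :
    primeWeight κ (m * n) = primeWeight κ m * primeWeight κ n := by
  rw [primeWeight, hmn.primeFactors_mul, prod_union hmn.disjoint_primeFactors, primeWeight,
    primeWeight]

theorem primeWeight_mul_div (hn : Squarefree n) (hmn : m ∣ n) :
    primeWeight κ m * primeWeight κ (n / m) = primeWeight κ n := by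
  have hmul : m * (n / m) = n := Nat.mul_div_cancel' hmn
  rw [← primeWeight_mul_of_coprime (Nat.coprime_of_squarefree_mul (hmul.symm ▸ hn)), hmul]

theorem prod_primeFactors_div_of_squarefree (hn : Squarefree n) (f : ℕ → ℝ) :
    ∏ p ∈ n.primeFactors, f p / p = (∏ p ∈ n.primeFactors, f p) / n := by
  rw [prod_div_distrib, ← Nat.cast_prod, Nat.prod_primeFactors_of_squarefree hn]

theorem primeWeight_one_of_squarefree (hn : Squarefree n) : primeWeight 1 n = 1 / n := by
  rw [primeWeight, prod_primeFactors_div_of_squarefree hn, prod_const_one]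

theorem primeWeight_mul_primeWeight (hn : Squarefree n) :
    primeWeight κ n * primeWeight μ n = primeWeight (κ * μ) n / n := by
  rw [primeWeight, primeWeight, primeWeight, ← prod_mul_distrib,
    ← prod_primeFactors_div_of_squarefree hn]
  exact prod_congr rfl fun p _ ↦ by rw [div_mul_div_comm, div_div]

theorem primeWeight_add (hn : Squarefree n) :
    primeWeight (κ + μ) n
      = ∑ x ∈ n.divisorsAntidiagonal, primeWeight κ x.1 * primeWeight μ x.2 := by
  simp only [primeWeight, add_div]
  exact prod_primeFactors_add_of_squarefree hn _ _

theorem sum_primeWeight_div_le (hκ : 0 ≤ κ) (N : ℕ) :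
    ∑ e ∈ Icc 1 N with Squarefree e, primeWeight κ e / e ≤ exp (2 * κ) := by
  calc ∑ e ∈ Icc 1 N with Squarefree e, primeWeight κ e / e
      = ∑ e ∈ Icc 1 N with Squarefree e, ∏ p ∈ e.primeFactors, κ / p / p :=
        sum_congr rfl fun e he ↦ (prod_primeFactors_div_of_squarefree (mem_filter.1 he).2 _).symm
    _ ≤ exp (∑ p ∈ Icc 1 N, κ / p / p) := sum_squarefree_prod_le_exp (fun p ↦ by positivity) N
    _ = exp (κ * ∑ p ∈ Icc 1 N, 1 / (p : ℝ) ^ 2) := by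
        rw [mul_sum]
        exact congrArg exp (sum_congr rfl fun p _ ↦ by ring)
    _ ≤ exp (2 * κ) := by
        rw [mul_comm 2]
        gcongr
        exact sum_one_div_sq_le_two N

theorem one_le_one_add_div (hκ : 0 ≤ κ) (p : ℕ) : 1 ≤ 1 + κ / p :=
  le_add_of_nonneg_right (by positivity)

theorem one_le_eulerFactor (hκ : 0 ≤ κ) (n : ℕ) : 1 ≤ eulerFactor κ n :=
  one_le_prod fun p _ ↦ one_le_one_add_div hκ p

theorem eulerFactor_nonneg (hκ : 0 ≤ κ) (n : ℕ) : 0 ≤ eulerFactor κ n :=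
  zero_le_one.trans (one_le_eulerFactor hκ n)

theorem eulerFactor_eq_sum_divisors (hn : n ≠ 0) :
    eulerFactor κ n = ∑ e ∈ n.divisors with Squarefree e, primeWeight κ e :=
  (sum_squarefree_divisors_prod hn fun p ↦ κ / p).symm

theorem eulerFactor_mul_le (hκ : 0 ≤ κ) (hm : m ≠ 0) (hn : n ≠ 0) :
    eulerFactor κ (m * n) ≤ eulerFactor κ m * eulerFactor κ n := by
  unfold eulerFactor
  rw [Nat.primeFactors_mul hm hn, ← prod_union_inter]
  exact le_mul_of_one_le_right (prod_nonneg fun p _ ↦ by positivity)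
    (one_le_prod fun p _ ↦ one_le_one_add_div hκ p)

theorem eulerFactor_mul_eulerFactor_le (hκ : 0 ≤ κ) (hμ : 0 ≤ μ) (n : ℕ) :
    eulerFactor κ n * eulerFactor μ n ≤ eulerFactor (κ + μ + κ * μ) n := by
  simp only [eulerFactor, ← prod_mul_distrib]
  refine prod_le_prod (fun p _ ↦ by positivity) fun p hp ↦ ?_
  have hp1 : (1 : ℝ) ≤ p := by exact_mod_cast (Nat.prime_of_mem_primeFactors hp).one_le
  have hsq : κ * μ / p / p ≤ κ * μ / p := div_le_self (by positivity) hp1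
  calc (1 + κ / p) * (1 + μ / p) = 1 + (κ / p + μ / p + κ * μ / p / p) := by ring
    _ ≤ 1 + (κ / p + μ / p + κ * μ / p) := by gcongr
    _ = 1 + (κ + μ + κ * μ) / p := by ring

theorem primeWeight_mul_eulerFactor_le (hκ : 0 ≤ κ) (hμ : 0 ≤ μ) (n : ℕ) :
    primeWeight κ n * eulerFactor μ n ≤ primeWeight (κ * (1 + μ)) n := by
  simp only [primeWeight, eulerFactor, ← prod_mul_distrib]
  refine prod_le_prod (fun p _ ↦ by positivity) fun p hp ↦ ?_
  have hp1 : (1 : ℝ) ≤ p := by exact_mod_cast (Nat.prime_of_mem_primeFactors hp).one_le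
  have hdiv : μ / p ≤ μ := div_le_self hμ hp1
  calc κ / p * (1 + μ / p) ≤ κ / p * (1 + μ) := by gcongr
    _ = κ * (1 + μ) / p := by ring

theorem sum_sum_squarefree_divisors_le {F : ℕ → ℕ → ℝ} (hF : ∀ d m, 0 ≤ F d m) (N : ℕ) :
    ∑ n ∈ Icc 1 N, ∑ d ∈ n.divisors with Squarefree d, F d (n / d)
      ≤ ∑ d ∈ Icc 1 N with Squarefree d, ∑ m ∈ Icc 1 N, F d m := by
  have hF' : ∀ d m, 0 ≤ if Squarefree d then F d m else 0 := fun d m ↦ by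
    split_ifs
    exacts [hF d m, le_rfl]
  refine (le_of_eq ?_).trans ((sum_sum_divisors_le hF' N).trans_eq ?_)
  · exact sum_congr rfl fun n _ ↦ sum_filter _ _
  · rw [sum_filter]
    exact sum_congr rfl fun d _ ↦ by split_ifs <;> simp

theorem sum_eulerFactor_div_le (hκ : 0 ≤ κ) (N : ℕ) :
    ∑ n ∈ Icc 1 N, eulerFactor κ n / n ≤ exp (2 * κ) * (1 + log N) := by
  calc ∑ n ∈ Icc 1 N, eulerFactor κ n / n
      = ∑ n ∈ Icc 1 N, ∑ d ∈ n.divisors with Squarefree d,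
          primeWeight κ d / d * (1 / (n / d : ℕ)) := by
        refine sum_congr rfl fun n hn ↦ ?_
        have hn0 : n ≠ 0 := Nat.one_le_iff_ne_zero.1 (mem_Icc.1 hn).1
        rw [eulerFactor_eq_sum_divisors hn0, sum_div]
        refine sum_congr rfl fun d hd ↦ ?_
        have hdn := Nat.dvd_of_mem_divisors (mem_filter.1 hd).1
        have hmul : (d : ℝ) * (n / d : ℕ) = n := by exact_mod_cast Nat.mul_div_cancel' hdn
        rw [div_mul_div_comm, mul_one, hmul]
    _ ≤ ∑ d ∈ Icc 1 N with Squarefree d, ∑ m ∈ Icc 1 N, primeWeight κ d / d * (1 / m) :=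
        sum_sum_squarefree_divisors_le (F := fun d m ↦ primeWeight κ d / d * (1 / m))
          (fun d m ↦ mul_nonneg (div_nonneg (primeWeight_nonneg hκ d) d.cast_nonneg)
            (by positivity)) N
    _ = (∑ d ∈ Icc 1 N with Squarefree d, primeWeight κ d / d) * ∑ m ∈ Icc 1 N, (1 : ℝ) / m :=
        (sum_mul_sum _ _ _ _).symm
    _ ≤ exp (2 * κ) * (1 + log N) :=
        mul_le_mul (sum_primeWeight_div_le hκ N) (sum_one_div_le_one_add_log N)
          (sum_nonneg fun _ _ ↦ by positivity) (exp_pos _).le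

end EulerFactors

section SquarefreeSums

open Finset

variable {κ μ : ℝ}

theorem div_gcd_mem_Icc {q N : ℕ} (hq : q ∈ Icc 1 N) (E : ℕ) : q / q.gcd E ∈ Icc 1 N := by
  have hq1 := (mem_Icc.1 hq).1
  exact mem_Icc.2 ⟨Nat.div_pos (Nat.gcd_le_left E hq1) (Nat.gcd_pos_of_pos_left E hq1),
    (Nat.div_le_self _ _).trans (mem_Icc.1 hq).2⟩

theorem squarefreeSum_le_eulerFactor_mul (hκ : 0 ≤ κ) (N : ℕ) {E : ℕ} (hE : E ≠ 0) :
    squarefreeSum κ N ≤ eulerFactor κ E *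
      ∑ q ∈ Icc 1 N with Squarefree q ∧ q.Coprime E, primeWeight κ q := by
  rw [eulerFactor_eq_sum_divisors hE, sum_mul_sum, ← sum_product', squarefreeSum]
  refine sum_le_sum_of_injOn (fun q ↦ (q.gcd E, q / q.gcd E)) ?_ ?_ ?_
    fun b _ ↦ mul_nonneg (primeWeight_nonneg hκ _) (primeWeight_nonneg hκ _)
  · intro q hq
    obtain ⟨hqN, hsq⟩ := mem_filter.1 hq
    have hgcd := q.gcd_dvd_left E
    simp only [coe_product, Set.mem_prod, mem_coe, mem_filter, Nat.mem_divisors]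
    exact ⟨⟨⟨q.gcd_dvd_right E, hE⟩, hsq.squarefree_of_dvd hgcd⟩, div_gcd_mem_Icc hqN E,
      hsq.squarefree_of_dvd (Nat.div_dvd_of_dvd hgcd), Nat.coprime_div_gcd_of_squarefree hsq hE⟩
  · intro q _ r _ hqr
    obtain ⟨hgcd, hdiv⟩ := Prod.mk.inj hqr
    rw [← Nat.mul_div_cancel' (q.gcd_dvd_left E), hdiv, hgcd,
      Nat.mul_div_cancel' (r.gcd_dvd_left E)]
  · exact fun q hq ↦ (primeWeight_mul_div (mem_filter.1 hq).2 (q.gcd_dvd_left E)).ge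

theorem log_add_one_le_squarefreeSum (N : ℕ) : log (N + 1) ≤ 2 * squarefreeSum 1 N := by
  choose u v huv hu using Nat.sq_mul_squarefree
  have hsum : ∑ n ∈ Icc 1 N, (1 : ℝ) / n
      ≤ (∑ v ∈ Icc 1 N, 1 / (v : ℝ) ^ 2) * squarefreeSum 1 N := by
    rw [squarefreeSum, sum_mul_sum, ← sum_product']
    refine sum_le_sum_of_injOn (fun n ↦ (v n, u n)) ?_ ?_ ?_
      fun b _ ↦ mul_nonneg (by positivity) (primeWeight_nonneg zero_le_one _)
    · intro n hn
      obtain ⟨hn1, hnN⟩ := mem_Icc.1 hn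
      have hv : v n ∣ n := Dvd.intro (v n * u n) (by rw [← mul_assoc, ← sq, huv])
      have hu' : u n ∣ n := Dvd.intro_left (v n ^ 2) (huv n)
      simp only [coe_product, Set.mem_prod, mem_coe, mem_filter, mem_Icc]
      exact ⟨⟨Nat.pos_of_dvd_of_pos hv hn1, (Nat.le_of_dvd hn1 hv).trans hnN⟩,
        ⟨Nat.pos_of_dvd_of_pos hu' hn1, (Nat.le_of_dvd hn1 hu').trans hnN⟩, hu n⟩
    · intro m _ n _ hmn
      obtain ⟨hv, hu'⟩ := Prod.mk.inj hmn
      rw [← huv m, ← huv n, hv, hu']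
    · intro n _
      rw [primeWeight_one_of_squarefree (hu n), div_mul_div_comm, one_mul]
      exact_mod_cast (congrArg (fun k : ℕ ↦ (1 : ℝ) / k) (huv n)).ge
  refine (log_add_one_le_sum_one_div N).trans (hsum.trans ?_)
  gcongr
  exacts [squarefreeSum_nonneg zero_le_one N, sum_one_div_sq_le_two N]

theorem squarefree_div_gcd_mul_div_gcd {u v : ℕ} (hu : Squarefree u) (hv : Squarefree v) :
    Squarefree (u / u.gcd v * (v / u.gcd v)) := by
  have hcoprime : (u / u.gcd v).Coprime (v / u.gcd v) :=
    Nat.coprime_div_gcd_div_gcd (Nat.gcd_pos_of_pos_left v (Nat.pos_of_ne_zero hu.ne_zero))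
  exact (Nat.squarefree_mul hcoprime).2
    ⟨hu.squarefree_of_dvd (Nat.div_dvd_of_dvd (u.gcd_dvd_left v)),
      hv.squarefree_of_dvd (Nat.div_dvd_of_dvd (u.gcd_dvd_right v))⟩

theorem primeWeight_mul_eq_gcd {u v : ℕ} (hu : Squarefree u) (hv : Squarefree v) :
    primeWeight κ u * primeWeight μ v = primeWeight (κ * μ) (u.gcd v) / (u.gcd v) *
      (primeWeight κ (u / u.gcd v) * primeWeight μ (v / u.gcd v)) := by
  rw [← primeWeight_mul_primeWeight (hu.squarefree_of_dvd (u.gcd_dvd_left v)),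
    ← primeWeight_mul_div hu (u.gcd_dvd_left v), ← primeWeight_mul_div hv (u.gcd_dvd_right v)]
  ring

theorem sum_primeWeight_mul_primeWeight_le (hκ : 0 ≤ κ) (hμ : 0 ≤ μ) (N R : ℕ) :
    ∑ x ∈ Icc 1 N ×ˢ Icc 1 R with Squarefree (x.1 * x.2), primeWeight κ x.1 * primeWeight μ x.2
      ≤ squarefreeSum (κ + μ) (N * R) := by
  have hadd : squarefreeSum (κ + μ) (N * R) = ∑ z ∈ ({n ∈ Icc 1 (N * R) | Squarefree n}).sigma
      Nat.divisorsAntidiagonal, primeWeight κ z.2.1 * primeWeight μ z.2.2 := by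
    rw [sum_sigma]
    exact sum_congr rfl fun n hn ↦ primeWeight_add (mem_filter.1 hn).2
  rw [hadd]
  refine sum_le_sum_of_injOn (fun x ↦ ⟨x.1 * x.2, x⟩) (fun x hx ↦ ?_)
    (fun x _ y _ hxy ↦ eq_of_heq (Sigma.mk.inj hxy).2) (fun _ _ ↦ le_rfl)
    fun z _ ↦ mul_nonneg (primeWeight_nonneg hκ _) (primeWeight_nonneg hμ _)
  obtain ⟨hmem, hsq⟩ := mem_filter.1 hx
  simp only [mem_product, mem_Icc] at hmem
  simp only [coe_sigma, Set.mem_sigma_iff, mem_coe, mem_filter, mem_Icc,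
    Nat.mem_divisorsAntidiagonal]
  exact ⟨⟨⟨Nat.mul_pos hmem.1.1 hmem.2.1, Nat.mul_le_mul hmem.1.2 hmem.2.2⟩, hsq⟩, trivial,
    hsq.ne_zero⟩

theorem squarefreeSum_mul_le_sum_mul_sum (hκ : 0 ≤ κ) (hμ : 0 ≤ μ) (N R : ℕ) :
    squarefreeSum κ N * squarefreeSum μ R ≤
      (∑ e ∈ Icc 1 N with Squarefree e, primeWeight (κ * μ) e / e) *
        ∑ x ∈ Icc 1 N ×ˢ Icc 1 R with Squarefree (x.1 * x.2),
          primeWeight κ x.1 * primeWeight μ x.2 := by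
  rw [squarefreeSum, squarefreeSum, sum_mul_sum, sum_mul_sum, ← sum_product', ← sum_product']
  refine sum_le_sum_of_injOn
    (fun z ↦ (z.1.gcd z.2, z.1 / z.1.gcd z.2, z.2 / z.1.gcd z.2)) ?_ ?_ ?_ ?_
  · rintro ⟨u, v⟩ huv
    simp only [coe_product, Set.mem_prod, mem_coe, mem_filter, mem_product] at huv ⊢
    obtain ⟨⟨huN, hu⟩, hvR, hv⟩ := huv
    have hg : u.gcd v ∈ Icc 1 N := mem_Icc.2 ⟨Nat.gcd_pos_of_pos_left v (mem_Icc.1 huN).1,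
      (Nat.gcd_le_left v (mem_Icc.1 huN).1).trans (mem_Icc.1 huN).2⟩
    exact ⟨⟨hg, hu.squarefree_of_dvd (u.gcd_dvd_left v)⟩,
      ⟨div_gcd_mem_Icc huN v, u.gcd_comm v ▸ div_gcd_mem_Icc hvR u⟩,
      squarefree_div_gcd_mul_div_gcd hu hv⟩
  · rintro ⟨u, v⟩ - ⟨u', v'⟩ - h
    obtain ⟨hg, hu, hv⟩ : u.gcd v = u'.gcd v' ∧ u / u.gcd v = u' / u'.gcd v' ∧
        v / u.gcd v = v' / u'.gcd v' := by simpa only [Prod.mk.injEq] using h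
    have huu' : u = u' := by
      rw [← Nat.mul_div_cancel' (u.gcd_dvd_left v), hu, hg,
        Nat.mul_div_cancel' (u'.gcd_dvd_left v')]
    have hvv' : v = v' := by
      rw [← Nat.mul_div_cancel' (u.gcd_dvd_right v), hv, hg,
        Nat.mul_div_cancel' (u'.gcd_dvd_right v')]
    rw [huu', hvv']
  · rintro ⟨u, v⟩ huv
    obtain ⟨hu, hv⟩ := mem_product.1 huv
    exact (primeWeight_mul_eq_gcd (mem_filter.1 hu).2 (mem_filter.1 hv).2).le
  · exact fun b _ ↦ mul_nonneg
      (div_nonneg (primeWeight_nonneg (mul_nonneg hκ hμ) _) (Nat.cast_nonneg _))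
      (mul_nonneg (primeWeight_nonneg hκ _) (primeWeight_nonneg hμ _))

theorem squarefreeSum_mul_le (hκ : 0 ≤ κ) (hμ : 0 ≤ μ) (N R : ℕ) :
    squarefreeSum κ N * squarefreeSum μ R
      ≤ exp (2 * (κ * μ)) * squarefreeSum (κ + μ) (N * R) :=
  (squarefreeSum_mul_le_sum_mul_sum hκ hμ N R).trans <|
    mul_le_mul (sum_primeWeight_div_le (mul_nonneg hκ hμ) N)
      (sum_primeWeight_mul_primeWeight_le hκ hμ N R)
      (sum_nonneg fun _ _ ↦ mul_nonneg (primeWeight_nonneg hκ _) (primeWeight_nonneg hμ _))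
      (exp_pos _).le

theorem log_pow_le_squarefreeSum (k N : ℕ) :
    log (N + 1) ^ k ≤ 2 ^ k * exp (k ^ 2) * squarefreeSum k (N ^ k) := by
  induction k with
  | zero => simp [squarefreeSum, primeWeight, filter_singleton]
  | succ k ih =>
    have hlog : 0 ≤ log (N + 1 : ℝ) := log_nonneg (by linarith [(N.cast_nonneg : (0 : ℝ) ≤ N)])
    have hexp : exp ((k : ℝ) ^ 2) * exp (2 * (k * 1)) ≤ exp ((k + 1 : ℕ) ^ 2) := by
      rw [← exp_add, exp_le_exp]
      push_cast
      linarith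
    calc log (N + 1) ^ (k + 1) = log (N + 1) ^ k * log (N + 1) := pow_succ _ _
      _ ≤ 2 ^ k * exp (k ^ 2) * squarefreeSum k (N ^ k) * (2 * squarefreeSum 1 N) :=
          mul_le_mul ih (log_add_one_le_squarefreeSum N) hlog (by
            have := squarefreeSum_nonneg (κ := k) k.cast_nonneg (N ^ k)
            positivity)
      _ = 2 ^ (k + 1) * exp (k ^ 2) * (squarefreeSum k (N ^ k) * squarefreeSum 1 N) := by ring
      _ ≤ 2 ^ (k + 1) * exp (k ^ 2) *
            (exp (2 * (k * 1)) * squarefreeSum (k + 1) (N ^ k * N)) := by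
          refine mul_le_mul_of_nonneg_left ?_ (by positivity)
          exact squarefreeSum_mul_le k.cast_nonneg zero_le_one _ _
      _ = 2 ^ (k + 1) * (exp (k ^ 2) * exp (2 * (k * 1))) *
            squarefreeSum (k + 1) (N ^ (k + 1)) := by rw [← pow_succ]; ring
      _ ≤ 2 ^ (k + 1) * exp ((k + 1 : ℕ) ^ 2) * squarefreeSum (k + 1 : ℕ) (N ^ (k + 1)) := by
          rw [Nat.cast_succ k] at hexp ⊢
          gcongr
          exact squarefreeSum_nonneg (by positivity) _

end SquarefreeSums

section UpperBoundSieve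

open Finset

variable {Z : ∀ p : ℕ, Finset (ZMod p)} {E k : ℕ}

theorem not_dvd_of_mem_primeFactors_of_coprime {p q : ℕ} (hq : q.Coprime E)
    (hp : p ∈ q.primeFactors) : ¬p ∣ E := fun hpE ↦
  (Nat.prime_of_mem_primeFactors hp).one_lt.ne'
    (Nat.eq_one_of_dvd_coprimes hq (Nat.dvd_of_mem_primeFactors hp) hpE)

theorem primeWeight_le_sieveDensity {q : ℕ}
    (hZ : ∀ p ∈ q.primeFactors, k ≤ #(Z p) ∧ #(Z p) < p) :
    primeWeight k q ≤ sieveDensity Z q := by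
  refine prod_le_prod (fun p _ ↦ by positivity) fun p hp ↦ ?_
  have hk : (k : ℝ) ≤ #(Z p) := by exact_mod_cast (hZ p hp).1
  have hlt : (#(Z p) : ℝ) < p := by exact_mod_cast (hZ p hp).2
  exact div_le_div₀ (Nat.cast_nonneg _) hk (by linarith) (by linarith)

theorem squarefreeSum_le_mul_sum_sieveDensity (hE : E ≠ 0)
    (hZ : ∀ p, p.Prime → ¬p ∣ E → k ≤ #(Z p) ∧ #(Z p) < p) (R : ℕ) :
    squarefreeSum k R
      ≤ eulerFactor k E * ∑ q ∈ Icc 1 R with Squarefree q ∧ q.Coprime E, sieveDensity Z q := by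
  refine (squarefreeSum_le_eulerFactor_mul k.cast_nonneg R hE).trans ?_
  refine mul_le_mul_of_nonneg_left (sum_le_sum fun q hq ↦ ?_) (eulerFactor_nonneg k.cast_nonneg E)
  refine primeWeight_le_sieveDensity fun p hp ↦ hZ p (Nat.prime_of_mem_primeFactors hp) ?_
  exact not_dvd_of_mem_primeFactors_of_coprime (mem_filter.1 hq).2.2 hp

theorem card_mul_log_pow_le_of_level (hE : E ≠ 0)
    (hZ : ∀ p, p.Prime → ¬p ∣ E → k ≤ #(Z p) ∧ #(Z p) < p) {Q N : ℕ} (hQ : 1 ≤ Q) {S : Finset ℕ}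
    (hS : ∀ n ∈ S, n ≤ N ∧ ∀ p, p.Prime → ¬p ∣ E → p ≤ Q ^ k → (n : ZMod p) ∉ Z p) :
    #S * log (Q + 1) ^ k
      ≤ 2 ^ k * exp (k ^ 2) * eulerFactor k E * (N + 1 + (Q : ℝ) ^ (6 * k)) := by
  set D := {q ∈ Icc 1 (Q ^ k) | Squarefree q ∧ q.Coprime E}
  have hprime : ∀ q ∈ D, ∀ p ∈ q.primeFactors, p.Prime ∧ ¬p ∣ E ∧ p ≤ Q ^ k := by
    intro q hq p hp
    obtain ⟨hqQ, -, hqE⟩ := mem_filter.1 hq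
    exact ⟨Nat.prime_of_mem_primeFactors hp, not_dvd_of_mem_primeFactors_of_coprime hqE hp,
      (Nat.le_of_mem_primeFactors hp).trans (mem_Icc.1 hqQ).2⟩
  have hone : 1 ∈ D := mem_filter.2
    ⟨mem_Icc.2 ⟨le_rfl, Nat.one_le_pow k Q hQ⟩, squarefree_one, Nat.coprime_one_left E⟩
  have hsieve : #S * ∑ q ∈ D, sieveDensity Z q ≤ N + 1 + (Q : ℝ) ^ (6 * k) := by
    have := card_mul_sum_sieveDensity_le (Z := Z) (S := S) (N := N + 1) (Q := Q ^ k)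
      (fun q hq ↦ ⟨(mem_filter.1 hq).2.1, (mem_Icc.1 (mem_filter.1 hq).1).2, fun p hp ↦
        (hZ p (hprime q hq p hp).1 (hprime q hq p hp).2.1).2⟩) hone
      fun n hn ↦ ⟨Nat.lt_succ_of_le (hS n hn).1, fun q hq p hp ↦
        (hS n hn).2 p (hprime q hq p hp).1 (hprime q hq p hp).2.1 (hprime q hq p hp).2.2⟩
    rwa [Nat.cast_pow, ← pow_mul, mul_comm k, Nat.cast_succ] at this
  have hG := eulerFactor_nonneg k.cast_nonneg E
  calc #S * log (Q + 1) ^ k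
      ≤ #S * (2 ^ k * exp (k ^ 2) * (eulerFactor k E * ∑ q ∈ D, sieveDensity Z q)) := by
        gcongr
        refine (log_pow_le_squarefreeSum k Q).trans ?_
        gcongr
        exact squarefreeSum_le_mul_sum_sieveDensity hE hZ _
    _ = 2 ^ k * exp (k ^ 2) * eulerFactor k E * (#S * ∑ q ∈ D, sieveDensity Z q) := by ring
    _ ≤ _ := by gcongr

theorem exists_pow_le_and_log_le {m N : ℕ} (hm : m ≠ 0) (hN : 1 ≤ N) :
    ∃ Q : ℕ, 1 ≤ Q ∧ Q ^ m ≤ N ∧ log (N + 1) ≤ m * log (Q + 1) := by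
  refine ⟨Nat.nthRoot m N, (Nat.le_nthRoot_iff hm).2 (by rwa [one_pow]),
    Nat.pow_nthRoot_le (Or.inl hm), ?_⟩
  rw [← log_pow]
  gcongr
  exact_mod_cast Nat.lt_pow_nthRoot_add_one hm N

theorem card_mul_log_pow_le_of_lt_pow {S : Finset ℕ} {Q : ℕ} (hS : ∀ n ∈ S, n < Q ^ k) :
    #S * log (Q + 1) ^ k ≤ (Q : ℝ) ^ (2 * k) := by
  have hcard : #S ≤ Q ^ k :=
    (card_le_card fun n hn ↦ mem_range.2 (hS n hn)).trans_eq (card_range _)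
  have hlog : 0 ≤ log (Q + 1 : ℝ) := log_nonneg (by linarith [(Q.cast_nonneg : (0 : ℝ) ≤ Q)])
  calc #S * log (Q + 1) ^ k ≤ (Q : ℝ) ^ k * (Q : ℝ) ^ k := by
        gcongr
        · exact_mod_cast hcard
        · linarith [log_le_sub_one_of_pos (by positivity : (0 : ℝ) < Q + 1)]
    _ = (Q : ℝ) ^ (2 * k) := by ring

theorem card_mul_log_pow_le_of_avoids (hE : E ≠ 0)
    (hZ : ∀ p, p.Prime → ¬p ∣ E → k ≤ #(Z p) ∧ #(Z p) < p) {N : ℕ} (hN : 1 ≤ N) {A : Finset ℕ}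
    (hA : ∀ n ∈ A, n ≤ N ∧ ∀ p, p.Prime → ¬p ∣ E → p ≤ n → (n : ZMod p) ∉ Z p) :
    #A * log (N + 1) ^ k
      ≤ (6 * (k + 1)) ^ k * (2 ^ (k + 2) * exp (k ^ 2)) * eulerFactor k E * N := by
  obtain ⟨Q, hQ, hQN, hlog⟩ := exists_pow_le_and_log_le (m := 6 * (k + 1)) (by omega) hN
  have hpow : ∀ j ≤ 6 * (k + 1), (Q : ℝ) ^ j ≤ N := fun j hj ↦ by
    exact_mod_cast (Nat.pow_le_pow_right hQ hj).trans hQN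
  have hG := one_le_eulerFactor k.cast_nonneg E
  have hN1 : (1 : ℝ) ≤ N := by exact_mod_cast hN
  have hlarge : #{n ∈ A | Q ^ k ≤ n} * log (Q + 1) ^ k
      ≤ 2 ^ k * exp (k ^ 2) * eulerFactor k E * (3 * N) := by
    refine (card_mul_log_pow_le_of_level (N := N) hE hZ hQ fun n hn ↦ ?_).trans
      (mul_le_mul_of_nonneg_left (by linarith [hpow (6 * k) (by omega)]) (by positivity))
    obtain ⟨hnA, hQn⟩ := mem_filter.1 hn
    exact ⟨(hA n hnA).1, fun p hp hpE hpQ ↦ (hA n hnA).2 p hp hpE (hpQ.trans hQn)⟩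
  have hsmall : #{n ∈ A | ¬Q ^ k ≤ n} * log (Q + 1) ^ k ≤ N :=
    (card_mul_log_pow_le_of_lt_pow fun n hn ↦ not_le.1 (mem_filter.1 hn).2).trans
      (hpow _ (by omega))
  have hexp : 1 ≤ 2 ^ k * exp ((k : ℝ) ^ 2) :=
    one_le_mul_of_one_le_of_one_le (one_le_pow₀ one_le_two) (one_le_exp (by positivity))
  have hC : 1 ≤ 2 ^ k * exp ((k : ℝ) ^ 2) * eulerFactor k E :=
    one_le_mul_of_one_le_of_one_le hexp hG
  have hlogN : 0 ≤ log (N + 1 : ℝ) := log_nonneg (by linarith)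
  calc #A * log (N + 1) ^ k ≤ #A * (6 * (k + 1) * log (Q + 1)) ^ k := by
        push_cast at hlog
        gcongr
    _ = (6 * (k + 1)) ^ k * (#{n ∈ A | Q ^ k ≤ n} * log (Q + 1) ^ k +
          #{n ∈ A | ¬Q ^ k ≤ n} * log (Q + 1) ^ k) := by
        rw [← card_filter_add_card_filter_not (s := A) (fun n ↦ Q ^ k ≤ n), Nat.cast_add, mul_pow]
        ring
    _ ≤ (6 * (k + 1)) ^ k * (2 ^ k * exp (k ^ 2) * eulerFactor k E * (3 * N) +
          2 ^ k * exp (k ^ 2) * eulerFactor k E * N) :=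
        mul_le_mul_of_nonneg_left (add_le_add hlarge
          (hsmall.trans (le_mul_of_one_le_left N.cast_nonneg hC))) (by positivity)
    _ = (6 * (k + 1)) ^ k * (2 ^ (k + 2) * exp (k ^ 2)) * eulerFactor k E * N := by ring

end UpperBoundSieve

section LinearForms

open Finset

variable {T : Finset ℕ} {E : ℕ}

/-- The residue classes `n` modulo `p` for which some `a * n + 1` with `a ∈ T` vanishes. -/
def linearFormRoots (T : Finset ℕ) (p : ℕ) : Finset (ZMod p) :=
  T.image fun a : ℕ ↦ -(a : ZMod p)⁻¹

theorem card_linearFormRoots (hsub : ∀ a ∈ T, ∀ b ∈ T, a < b → b - a ∣ E)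
    {p : ℕ} (hp : p.Prime) (hpE : ¬p ∣ E) : #(linearFormRoots T p) = #T := by
  have : Fact p.Prime := ⟨hp⟩
  refine card_image_of_injOn fun a ha b hb hab ↦ ?_
  have hmod : a ≡ b [MOD p] :=
    (ZMod.natCast_eq_natCast_iff a b p).1 (inv_injective (neg_injective hab))
  rcases lt_trichotomy a b with hlt | rfl | hlt
  · exact absurd (((Nat.modEq_iff_dvd' hlt.le).1 hmod).trans (hsub a ha b hb hlt)) hpE
  · rfl
  · exact absurd (((Nat.modEq_iff_dvd' hlt.le).1 hmod.symm).trans (hsub b hb a ha hlt)) hpE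

theorem card_linearFormRoots_lt (hdvd : ∀ a ∈ T, a ∣ E) {p : ℕ} (hp : p.Prime) (hpE : ¬p ∣ E) :
    #(linearFormRoots T p) < p := by
  have : Fact p.Prime := ⟨hp⟩
  have hsub : linearFormRoots T p ⊆ univ.erase 0 := by
    intro z hz
    obtain ⟨a, ha, rfl⟩ := mem_image.1 hz
    have ha0 : (a : ZMod p) ≠ 0 := fun h ↦
      hpE (((ZMod.natCast_eq_zero_iff a p).1 h).trans (hdvd a ha))
    simpa using ha0
  calc #(linearFormRoots T p) ≤ #((univ : Finset (ZMod p)).erase 0) := card_le_card hsub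
    _ < #(univ : Finset (ZMod p)) := card_erase_lt_of_mem (mem_univ 0)
    _ = p := by rw [card_univ, ZMod.card]

theorem natCast_notMem_linearFormRoots {n p : ℕ} (hdvd : ∀ a ∈ T, a ∣ E) (hp : p.Prime)
    (hpE : ¬p ∣ E) (hpn : p ≤ n) (hn : ∀ a ∈ T, (a * n + 1).Prime) :
    (n : ZMod p) ∉ linearFormRoots T p := by
  have : Fact p.Prime := ⟨hp⟩
  intro hmem
  obtain ⟨a, ha, hroot⟩ := mem_image.1 hmem
  have ha0 : (a : ZMod p) ≠ 0 := fun h ↦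
    hpE (((ZMod.natCast_eq_zero_iff a p).1 h).trans (hdvd a ha))
  have hzero : ((a * n + 1 : ℕ) : ZMod p) = 0 := by
    push_cast
    rw [← hroot, mul_neg, mul_inv_cancel₀ ha0, neg_add_cancel]
  have hpa : p = a * n + 1 :=
    (Nat.prime_dvd_prime_iff_eq hp (hn a ha)).1 ((ZMod.natCast_eq_zero_iff _ p).1 hzero)
  have ha1 : 1 ≤ a := Nat.one_le_iff_ne_zero.2 (by rintro rfl; exact ha0 Nat.cast_zero)
  have : n ≤ a * n := Nat.le_mul_of_pos_left n ha1
  omega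

theorem exists_card_linearForms_prime_le (k : ℕ) : ∃ C : ℝ, 0 < C ∧ ∀ (T : Finset ℕ) (E N : ℕ),
    #T = k → E ≠ 0 → (∀ a ∈ T, a ∣ E) → (∀ a ∈ T, ∀ b ∈ T, a < b → b - a ∣ E) → 1 ≤ N →
      #{n ∈ Icc 1 N | ∀ a ∈ T, (a * n + 1).Prime} * log (N + 1) ^ k
        ≤ C * eulerFactor k E * N := by
  refine ⟨(6 * (k + 1)) ^ k * (2 ^ (k + 2) * exp (k ^ 2)), by positivity,
    fun T E N hT hE hdvd hsub hN ↦ ?_⟩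
  refine card_mul_log_pow_le_of_avoids (Z := linearFormRoots T) hE (fun p hp hpE ↦ ?_) hN
    fun n hn ↦ ?_
  · exact ⟨(hT.symm.trans (card_linearFormRoots hsub hp hpE).symm).le,
      card_linearFormRoots_lt hdvd hp hpE⟩
  · obtain ⟨hnN, hprime⟩ := mem_filter.1 hn
    exact ⟨(mem_Icc.1 hnN).2, fun p hp hpE hpn ↦
      natCast_notMem_linearFormRoots hdvd hp hpE hpn hprime⟩

end LinearForms

section Cofactors

open Finset

/-- The `n ≥ max u v` with `u * v * n ≤ X` for which every `t * n + 1` with `t ∈ T` is prime: the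
choices for the largest entry of a triple `u, v, n` once the other two are fixed. -/
def cofactors (T : Finset ℕ) (u v X : ℕ) : Finset ℕ :=
  {n ∈ Icc 1 X | u * v * n ≤ X ∧ u ≤ n ∧ v ≤ n ∧ ∀ t ∈ T, (t * n + 1).Prime}

variable {T : Finset ℕ} {u v n X : ℕ}

theorem mem_cofactors : n ∈ cofactors T u v X ↔
    n ∈ Icc 1 X ∧ u * v * n ≤ X ∧ u ≤ n ∧ v ≤ n ∧ ∀ t ∈ T, (t * n + 1).Prime :=
  mem_filter

theorem le_div_of_mem_cofactors (hu : 1 ≤ u) (hv : 1 ≤ v) (hn : n ∈ cofactors T u v X) :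
    n ≤ X / (u * v) := by
  rw [Nat.le_div_iff_mul_le (Nat.mul_pos hu hv), mul_comm]
  exact (mem_cofactors.1 hn).2.1

theorem log_le_of_mem_cofactors (hu : 1 ≤ u) (hv : 1 ≤ v) (hn : n ∈ cofactors T u v X) :
    log X ≤ 3 * log ((X / (u * v) : ℕ) + 1) := by
  obtain ⟨hnX, -, hun, hvn, -⟩ := mem_cofactors.1 hn
  have hnN := le_div_of_mem_cofactors hu hv hn
  set N := X / (u * v)
  have hcube : X ≤ (N + 1) ^ 3 :=
    calc X ≤ u * v * (N + 1) := (Nat.lt_mul_div_succ X (Nat.mul_pos hu hv)).le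
      _ ≤ (N + 1) * (N + 1) * (N + 1) := by gcongr <;> omega
      _ = (N + 1) ^ 3 := by ring
  have hX : (0 : ℝ) < X := by exact_mod_cast (mem_Icc.1 hnX).1.trans (mem_Icc.1 hnX).2
  calc log X ≤ log (((N : ℝ) + 1) ^ 3) := log_le_log hX (by exact_mod_cast hcube)
    _ = 3 * log (N + 1) := by rw [log_pow, Nat.cast_ofNat]

theorem exists_card_cofactors_le (k : ℕ) : ∃ C : ℝ, 0 < C ∧ ∀ (T : Finset ℕ) (E u v X : ℕ),
    #T = k → E ≠ 0 → (∀ a ∈ T, a ∣ E) → (∀ a ∈ T, ∀ b ∈ T, a < b → b - a ∣ E) → 1 ≤ u → 1 ≤ v →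
      #(cofactors T u v X) * log X ^ k ≤ C * X * (eulerFactor k E / (u * v)) := by
  obtain ⟨C, hC, hsieve⟩ := exists_card_linearForms_prime_le k
  refine ⟨3 ^ k * C, by positivity, fun T E u v X hT hE hdvd hsub hu hv ↦ ?_⟩
  have hG := eulerFactor_nonneg (k.cast_nonneg (α := ℝ)) E
  rcases (cofactors T u v X).eq_empty_or_nonempty with hempty | ⟨n, hn⟩
  · rw [hempty, card_empty, Nat.cast_zero, zero_mul]
    positivity
  have hlog := log_le_of_mem_cofactors hu hv hn
  have hN : 1 ≤ X / (u * v) :=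
    (mem_Icc.1 (mem_cofactors.1 hn).1).1.trans (le_div_of_mem_cofactors hu hv hn)
  have hcard : #(cofactors T u v X)
      ≤ #{n ∈ Icc 1 (X / (u * v)) | ∀ a ∈ T, (a * n + 1).Prime} := card_le_card fun m hm ↦
    mem_filter.2 ⟨mem_Icc.2 ⟨(mem_Icc.1 (mem_cofactors.1 hm).1).1,
      le_div_of_mem_cofactors hu hv hm⟩, (mem_cofactors.1 hm).2.2.2.2⟩
  have hdiv : ((X / (u * v) : ℕ) : ℝ) ≤ X / (u * v) := by exact_mod_cast Nat.cast_div_le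
  calc #(cofactors T u v X) * log X ^ k
      ≤ #{n ∈ Icc 1 (X / (u * v)) | ∀ a ∈ T, (a * n + 1).Prime} *
          (3 * log ((X / (u * v) : ℕ) + 1)) ^ k := by
        gcongr
    _ = 3 ^ k * (#{n ∈ Icc 1 (X / (u * v)) | ∀ a ∈ T, (a * n + 1).Prime} *
          log ((X / (u * v) : ℕ) + 1) ^ k) := by rw [mul_pow]; ring
    _ ≤ 3 ^ k * (C * eulerFactor k E * (X / (u * v) : ℕ)) :=
        mul_le_mul_of_nonneg_left (hsieve T E _ hT hE hdvd hsub hN) (by positivity)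
    _ ≤ 3 ^ k * (C * eulerFactor k E * (X / (u * v))) := by gcongr
    _ = 3 ^ k * C * X * (eulerFactor k E / (u * v)) := by ring

end Cofactors

section SumsOverPairs

open Finset

variable {κ : ℝ}

theorem eulerFactor_pow_le (hκ : 0 ≤ κ) (k n : ℕ) :
    eulerFactor κ n ^ k ≤ eulerFactor ((1 + κ) ^ k - 1) n := by
  induction k with
  | zero => simp [eulerFactor]
  | succ k ih =>
    have hpow : 0 ≤ (1 + κ) ^ k - 1 := sub_nonneg.2 (one_le_pow₀ (by linarith))
    calc eulerFactor κ n ^ (k + 1) = eulerFactor κ n ^ k * eulerFactor κ n := pow_succ _ _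
      _ ≤ eulerFactor ((1 + κ) ^ k - 1) n * eulerFactor κ n :=
          mul_le_mul_of_nonneg_right ih (eulerFactor_nonneg hκ n)
      _ ≤ eulerFactor ((1 + κ) ^ k - 1 + κ + ((1 + κ) ^ k - 1) * κ) n :=
          eulerFactor_mul_eulerFactor_le hpow hκ n
      _ = eulerFactor ((1 + κ) ^ (k + 1) - 1) n := by congr 1; ring

theorem three_mul_mul_mul_le_sum_cubes {x y z : ℝ} (hx : 0 ≤ x) (hy : 0 ≤ y) (hz : 0 ≤ z) :
    3 * (x * y * z) ≤ x ^ 3 + y ^ 3 + z ^ 3 := by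
  have hfactor : 0 ≤ (x + y + z) * ((x - y) ^ 2 + (y - z) ^ 2 + (z - x) ^ 2) := by positivity
  linarith

theorem three_mul_eulerFactor_mul_mul_le (hκ : 0 ≤ κ) {a b c : ℕ} (ha : a ≠ 0) (hb : b ≠ 0)
    (hc : c ≠ 0) :
    3 * eulerFactor κ (a * b * c) ≤ eulerFactor ((1 + κ) ^ 3 - 1) a +
      eulerFactor ((1 + κ) ^ 3 - 1) b + eulerFactor ((1 + κ) ^ 3 - 1) c := by
  have hG := eulerFactor_nonneg hκ
  calc 3 * eulerFactor κ (a * b * c)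
      ≤ 3 * (eulerFactor κ a * eulerFactor κ b * eulerFactor κ c) := by
        refine mul_le_mul_of_nonneg_left ?_ zero_le_three
        exact (eulerFactor_mul_le hκ (mul_ne_zero ha hb) hc).trans
          (mul_le_mul_of_nonneg_right (eulerFactor_mul_le hκ ha hb) (hG c))
    _ ≤ eulerFactor κ a ^ 3 + eulerFactor κ b ^ 3 + eulerFactor κ c ^ 3 :=
        three_mul_mul_mul_le_sum_cubes (hG a) (hG b) (hG c)
    _ ≤ _ := add_le_add (add_le_add (eulerFactor_pow_le hκ 3 a) (eulerFactor_pow_le hκ 3 b))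
        (eulerFactor_pow_le hκ 3 c)

theorem sum_lt_div_mul_le {f : ℕ → ℝ} (hf : ∀ n, 0 ≤ f n) {X : ℕ} {m n : ℕ → ℕ → ℕ}
    (hmem : ∀ a ∈ Icc 1 X, ∀ b ∈ Icc 1 X, a < b → m a b ∈ Icc 1 X ∧ n a b ∈ Icc 1 X)
    (hmul : ∀ a b, a < b → m a b * n a b ≤ a * b)
    (hinj : Set.InjOn (fun z : ℕ × ℕ ↦ (m z.1 z.2, n z.1 z.2)) {z | z.1 < z.2}) :
    ∑ z ∈ Icc 1 X ×ˢ Icc 1 X with z.1 < z.2, f (m z.1 z.2) / (z.1 * z.2)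
      ≤ (∑ n ∈ Icc 1 X, f n / n) * (1 + log X) := by
  refine le_trans ?_ (mul_le_mul_of_nonneg_left (sum_one_div_le_one_add_log X)
    (sum_nonneg fun i _ ↦ div_nonneg (hf i) i.cast_nonneg))
  rw [sum_mul_sum, ← sum_product']
  have hmaps : ∀ z ∈ Icc 1 X ×ˢ Icc 1 X, z.1 < z.2 →
      m z.1 z.2 ∈ Icc 1 X ∧ n z.1 z.2 ∈ Icc 1 X := fun z hz ↦
    hmem z.1 (mem_product.1 hz).1 z.2 (mem_product.1 hz).2
  refine sum_le_sum_of_injOn (fun z ↦ (m z.1 z.2, n z.1 z.2)) (fun z hz ↦ ?_)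
    (hinj.mono fun z hz ↦ (mem_filter.1 hz).2) (fun z hz ↦ ?_)
    fun z _ ↦ mul_nonneg (div_nonneg (hf _) (Nat.cast_nonneg _)) (by positivity)
  · exact mem_product.2 (hmaps z (mem_filter.1 hz).1 (mem_filter.1 hz).2)
  · obtain ⟨hzX, hlt⟩ := mem_filter.1 hz
    obtain ⟨hm, hn⟩ := hmaps z hzX hlt
    have hpos : 0 < m z.1 z.2 * n z.1 z.2 := Nat.mul_pos (mem_Icc.1 hm).1 (mem_Icc.1 hn).1
    rw [div_mul_div_comm, mul_one]
    exact div_le_div_of_nonneg_left (hf _) (by exact_mod_cast hpos)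
      (by exact_mod_cast hmul z.1 z.2 hlt)

theorem sum_lt_sub_div_mul_le {f : ℕ → ℝ} (hf : ∀ n, 0 ≤ f n) (X : ℕ) :
    ∑ z ∈ Icc 1 X ×ˢ Icc 1 X with z.1 < z.2, f (z.2 - z.1) / (z.1 * z.2)
      ≤ (∑ n ∈ Icc 1 X, f n / n) * (1 + log X) := by
  refine sum_lt_div_mul_le (m := fun a b ↦ b - a) (n := fun a _ ↦ a) hf
    (fun a ha b hb hab ↦ ⟨?_, ha⟩) (fun a b _ ↦ ?_) ?_
  · simp only [mem_Icc] at hb ⊢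
    omega
  · exact (Nat.mul_le_mul_right a (Nat.sub_le b a)).trans_eq (mul_comm b a)
  · rintro ⟨a, b⟩ (hab : a < b) ⟨c, d⟩ (hcd : c < d) h
    simp only [Prod.mk.injEq] at h ⊢
    omega

theorem sum_lt_eulerFactor_div_mul_le (hκ : 0 ≤ κ) (X : ℕ) :
    ∑ z ∈ Icc 1 X ×ˢ Icc 1 X with z.1 < z.2,
        eulerFactor κ (z.1 * z.2 * (z.2 - z.1)) / (z.1 * z.2)
      ≤ exp (2 * ((1 + κ) ^ 3 - 1)) * (1 + log X) ^ 2 := by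
  set ν := (1 + κ) ^ 3 - 1
  have hν0 : 0 ≤ ν := sub_nonneg.2 (one_le_pow₀ (by linarith))
  have hG := eulerFactor_nonneg hν0
  have hfst : ∑ z ∈ Icc 1 X ×ˢ Icc 1 X with z.1 < z.2, eulerFactor ν z.1 / (z.1 * z.2)
      ≤ (∑ n ∈ Icc 1 X, eulerFactor ν n / n) * (1 + log X) :=
    sum_lt_div_mul_le (m := fun a _ ↦ a) (n := fun _ b ↦ b) hG (fun _ ha _ hb _ ↦ ⟨ha, hb⟩)
      (fun _ _ _ ↦ le_rfl) Function.injective_id.injOn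
  have hsnd : ∑ z ∈ Icc 1 X ×ˢ Icc 1 X with z.1 < z.2, eulerFactor ν z.2 / (z.1 * z.2)
      ≤ (∑ n ∈ Icc 1 X, eulerFactor ν n / n) * (1 + log X) :=
    sum_lt_div_mul_le (m := fun _ b ↦ b) (n := fun a _ ↦ a) hG (fun _ ha _ hb _ ↦ ⟨hb, ha⟩)
      (fun a b _ ↦ (mul_comm b a).le) Prod.swap_injective.injOn
  have hsub : ∑ z ∈ Icc 1 X ×ˢ Icc 1 X with z.1 < z.2, eulerFactor ν (z.2 - z.1) / (z.1 * z.2)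
      ≤ (∑ n ∈ Icc 1 X, eulerFactor ν n / n) * (1 + log X) :=
    sum_lt_sub_div_mul_le hG X
  have hpoint : ∀ z ∈ ({z ∈ Icc 1 X ×ˢ Icc 1 X | z.1 < z.2} : Finset (ℕ × ℕ)),
      3 * (eulerFactor κ (z.1 * z.2 * (z.2 - z.1)) / (z.1 * z.2)) ≤
        eulerFactor ν z.1 / (z.1 * z.2) + eulerFactor ν z.2 / (z.1 * z.2) +
          eulerFactor ν (z.2 - z.1) / (z.1 * z.2) := by
    intro z hz
    simp only [mem_filter, mem_product, mem_Icc] at hz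
    rw [← add_div, ← add_div, mul_div_assoc']
    exact div_le_div_of_nonneg_right (three_mul_eulerFactor_mul_mul_le hκ (by omega) (by omega)
      (by omega)) (by positivity)
  have hsum := sum_le_sum hpoint
  rw [← mul_sum, sum_add_distrib, sum_add_distrib] at hsum
  calc _ ≤ (∑ n ∈ Icc 1 X, eulerFactor ν n / n) * (1 + log X) := by linarith
    _ ≤ exp (2 * ν) * (1 + log X) * (1 + log X) := by
        gcongr
        exact sum_eulerFactor_div_le hν0 X
    _ = exp (2 * ν) * (1 + log X) ^ 2 := by ring

end SumsOverPairs

section ShiftedPrimes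

open Finset

/-- The weight `1 / (m * n)` restricted to the pairs for which `k * m * n + 1` is prime. -/
noncomputable def shiftedPrimeWeight (k m n : ℕ) : ℝ :=
  if (k * m * n + 1).Prime then 1 / (m * n) else 0

variable {k : ℕ}

theorem shiftedPrimeWeight_nonneg (k m n : ℕ) : 0 ≤ shiftedPrimeWeight k m n := by
  unfold shiftedPrimeWeight
  split_ifs <;> positivity

theorem shiftedPrimeWeight_comm (k m n : ℕ) :
    shiftedPrimeWeight k m n = shiftedPrimeWeight k n m := by
  rw [shiftedPrimeWeight, shiftedPrimeWeight, mul_right_comm k, mul_comm (m : ℝ)]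

theorem shiftedPrimeWeight_eq_one_div_mul (k m n : ℕ) :
    shiftedPrimeWeight k m n = 1 / m * shiftedPrimeWeight (k * m) 1 n := by
  simp only [shiftedPrimeWeight, mul_one, mul_ite, mul_zero, Nat.cast_one, one_mul,
    one_div_mul_one_div]

theorem shiftedPrimeWeight_one_eq_of_dvd {d : ℕ} (hkd : k ∣ d) (n : ℕ) :
    shiftedPrimeWeight 1 d n = 1 / k * shiftedPrimeWeight k (d / k) n := by
  have hmul : k * (d / k) = d := Nat.mul_div_cancel' hkd
  have hcast : (d : ℝ) = k * (d / k : ℕ) := by exact_mod_cast hmul.symm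
  simp only [shiftedPrimeWeight, hmul, one_mul, mul_ite, mul_zero, hcast, one_div_mul_one_div,
    mul_assoc]

theorem exists_sum_dyadic_shiftedPrimeWeight_one_le : ∃ C : ℝ, 0 < C ∧ ∀ k j : ℕ, 1 ≤ k →
    ∑ n ∈ Ico (2 ^ j) (2 ^ (j + 1)), shiftedPrimeWeight k 1 n ≤ C * eulerFactor 1 k / (j + 1) := by
  obtain ⟨C, hC, hsieve⟩ := exists_card_linearForms_prime_le 1
  refine ⟨4 * C, by positivity, fun k j hk ↦ ?_⟩
  set S := {n ∈ Icc 1 (2 ^ (j + 1)) | ∀ a ∈ ({k} : Finset ℕ), (a * n + 1).Prime}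
  have hsum : ∑ n ∈ Ico (2 ^ j) (2 ^ (j + 1)), shiftedPrimeWeight k 1 n ≤ #S * (1 / 2 ^ j) := by
    simp only [shiftedPrimeWeight, mul_one, Nat.cast_one, one_mul]
    rw [← sum_filter]
    refine (sum_le_card_nsmul _ _ (1 / 2 ^ j) fun n hn ↦ ?_).trans ?_
    · have hjn := (mem_Ico.1 (mem_filter.1 hn).1).1
      exact one_div_le_one_div_of_le (by positivity) (by exact_mod_cast hjn)
    · rw [nsmul_eq_mul]
      gcongr
      intro n hn
      obtain ⟨hnj, hprime⟩ := mem_filter.1 hn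
      obtain ⟨hle, hlt⟩ := mem_Ico.1 hnj
      exact mem_filter.2 ⟨mem_Icc.2 ⟨Nat.one_le_two_pow.trans hle, hlt.le⟩,
        fun a ha ↦ mem_singleton.1 ha ▸ hprime⟩
  have hlog : ((j : ℝ) + 1) / 2 ≤ log ((2 ^ (j + 1) : ℕ) + 1) := by
    calc ((j : ℝ) + 1) / 2 ≤ (j + 1) * log 2 := by nlinarith [log_two_gt_d9, j.cast_nonneg (α := ℝ)]
      _ = log (2 ^ (j + 1)) := by rw [log_pow, Nat.cast_succ]
      _ ≤ log ((2 ^ (j + 1) : ℕ) + 1) := log_le_log (by positivity) (by push_cast; linarith)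
  have hcard : #S * (((j : ℝ) + 1) / 2) ≤ C * eulerFactor 1 k * 2 ^ (j + 1) := by
    have := hsieve {k} k (2 ^ (j + 1)) (card_singleton k) (by omega) (by simp) (by simp)
      Nat.one_le_two_pow
    rw [pow_one, Nat.cast_one, Nat.cast_pow, Nat.cast_ofNat] at this
    refine le_trans (mul_le_mul_of_nonneg_left ?_ (Nat.cast_nonneg _)) this
    exact_mod_cast hlog
  refine hsum.trans ?_
  rw [le_div_iff₀ (by positivity), mul_one_div, div_mul_eq_mul_div, div_le_iff₀ (by positivity)]
  rw [pow_succ] at hcard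
  linarith

theorem exists_sum_dyadic_shiftedPrimeWeight_le : ∃ C : ℝ, 0 < C ∧ ∀ k j : ℕ, 1 ≤ k →
    ∑ n ∈ Ico (2 ^ j) (2 ^ (j + 1)), ∑ m ∈ Icc 1 n, shiftedPrimeWeight k m n
      ≤ C * eulerFactor 1 k := by
  obtain ⟨C, hC, hdyadic⟩ := exists_sum_dyadic_shiftedPrimeWeight_one_le
  refine ⟨2 * exp 2 * C, by positivity, fun k j hk ↦ ?_⟩
  have hG := eulerFactor_nonneg zero_le_one
  have hj : 1 + log (2 ^ (j + 1) : ℕ) ≤ 2 * ((j : ℝ) + 1) := by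
    rw [Nat.cast_pow, log_pow, Nat.cast_succ, Nat.cast_ofNat]
    nlinarith [log_two_lt_d9, j.cast_nonneg (α := ℝ)]
  calc ∑ n ∈ Ico (2 ^ j) (2 ^ (j + 1)), ∑ m ∈ Icc 1 n, shiftedPrimeWeight k m n
      ≤ ∑ n ∈ Ico (2 ^ j) (2 ^ (j + 1)), ∑ m ∈ Icc 1 (2 ^ (j + 1)), shiftedPrimeWeight k m n := by
        refine sum_le_sum fun n hn ↦ sum_le_sum_of_subset_of_nonneg
          (Icc_subset_Icc_right (mem_Ico.1 hn).2.le) fun m _ _ ↦ shiftedPrimeWeight_nonneg k m n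
    _ = ∑ m ∈ Icc 1 (2 ^ (j + 1)),
          1 / m * ∑ n ∈ Ico (2 ^ j) (2 ^ (j + 1)), shiftedPrimeWeight (k * m) 1 n := by
        rw [sum_comm]
        simp only [mul_sum, ← shiftedPrimeWeight_eq_one_div_mul]
    _ ≤ ∑ m ∈ Icc 1 (2 ^ (j + 1)), 1 / m * (C * (eulerFactor 1 k * eulerFactor 1 m) / (j + 1)) := by
        refine sum_le_sum fun m hm ↦ mul_le_mul_of_nonneg_left ?_ (by positivity)
        have hm1 := (mem_Icc.1 hm).1
        refine (hdyadic (k * m) j (Nat.mul_pos hk hm1)).trans ?_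
        gcongr
        exact eulerFactor_mul_le zero_le_one (by omega) (by omega)
    _ = C * eulerFactor 1 k / (j + 1) * ∑ m ∈ Icc 1 (2 ^ (j + 1)), eulerFactor 1 m / m := by
        rw [mul_sum]
        exact sum_congr rfl fun m _ ↦ by ring
    _ ≤ C * eulerFactor 1 k / (j + 1) * (exp 2 * (2 * (j + 1))) := by
        have := (sum_eulerFactor_div_le zero_le_one (2 ^ (j + 1))).trans
          (mul_le_mul_of_nonneg_left hj (exp_pos _).le)
        rw [mul_one] at this
        have hGk := hG k
        gcongr
    _ = 2 * exp 2 * C * eulerFactor 1 k := by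
        field_simp

theorem sum_Icc_le_sum_dyadic {f : ℕ → ℝ} (hf : ∀ n, 0 ≤ f n) (X : ℕ) :
    ∑ n ∈ Icc 1 X, f n ≤ ∑ j ∈ range (Nat.log 2 X + 1), ∑ n ∈ Ico (2 ^ j) (2 ^ (j + 1)), f n := by
  rw [sum_sigma']
  refine sum_le_sum_of_injOn (fun n ↦ ⟨Nat.log 2 n, n⟩) (fun n hn ↦ ?_)
    (fun m _ n _ hmn ↦ eq_of_heq (Sigma.mk.inj hmn).2) (fun _ _ ↦ le_rfl) fun x _ ↦ hf x.2
  obtain ⟨hn1, hnX⟩ := mem_Icc.1 hn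
  exact mem_sigma.2 ⟨mem_range.2 (Nat.lt_succ_of_le (Nat.log_mono_right (b := 2) hnX)),
    mem_Ico.2 ⟨Nat.pow_log_le_self 2 (by omega), Nat.lt_pow_succ_log_self one_lt_two n⟩⟩

theorem sum_sum_le_two_mul_of_symm {f : ℕ → ℕ → ℝ} (hf : ∀ m n, 0 ≤ f m n)
    (hsymm : ∀ m n, f m n = f n m) (X : ℕ) :
    ∑ m ∈ Icc 1 X, ∑ n ∈ Icc 1 X, f m n ≤ 2 * ∑ n ∈ Icc 1 X, ∑ m ∈ Icc 1 n, f m n := by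
  set g : ℕ → ℕ → ℝ := fun m n ↦ if m ≤ n then f m n else 0 with hg
  have htriangle : ∑ n ∈ Icc 1 X, ∑ m ∈ Icc 1 n, f m n = ∑ n ∈ Icc 1 X, ∑ m ∈ Icc 1 X, g m n := by
    refine sum_congr rfl fun n hn ↦ ?_
    rw [← sum_filter]
    refine sum_congr (ext fun m ↦ ?_) fun _ _ ↦ rfl
    simp only [mem_Icc, mem_filter] at hn ⊢
    omega
  have hle : ∀ m n, f m n ≤ g m n + g n m := fun m n ↦ by
    rcases le_total m n with h | h <;> simp only [hg, h, if_true] <;> split_ifs <;>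
      linarith [hf m n, hsymm m n]
  calc ∑ m ∈ Icc 1 X, ∑ n ∈ Icc 1 X, f m n
      ≤ ∑ m ∈ Icc 1 X, ∑ n ∈ Icc 1 X, (g m n + g n m) :=
        sum_le_sum fun m _ ↦ sum_le_sum fun n _ ↦ hle m n
    _ = ∑ m ∈ Icc 1 X, ∑ n ∈ Icc 1 X, g m n + ∑ m ∈ Icc 1 X, ∑ n ∈ Icc 1 X, g n m := by
        simp only [sum_add_distrib]
    _ = 2 * ∑ n ∈ Icc 1 X, ∑ m ∈ Icc 1 n, f m n := by
        rw [sum_comm, htriangle, two_mul]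

theorem exists_sum_shiftedPrimeWeight_le : ∃ C : ℝ, 0 < C ∧ ∀ k X : ℕ, 1 ≤ k →
    ∑ m ∈ Icc 1 X, ∑ n ∈ Icc 1 X, shiftedPrimeWeight k m n
      ≤ C * eulerFactor 1 k * (Nat.log 2 X + 1) := by
  obtain ⟨C, hC, hdyadic⟩ := exists_sum_dyadic_shiftedPrimeWeight_le
  refine ⟨2 * C, by positivity, fun k X hk ↦ ?_⟩
  calc ∑ m ∈ Icc 1 X, ∑ n ∈ Icc 1 X, shiftedPrimeWeight k m n
      ≤ 2 * ∑ n ∈ Icc 1 X, ∑ m ∈ Icc 1 n, shiftedPrimeWeight k m n :=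
        sum_sum_le_two_mul_of_symm (shiftedPrimeWeight_nonneg k) (shiftedPrimeWeight_comm k) X
    _ ≤ 2 * ∑ j ∈ range (Nat.log 2 X + 1), ∑ n ∈ Ico (2 ^ j) (2 ^ (j + 1)), ∑ m ∈ Icc 1 n,
          shiftedPrimeWeight k m n := by
        gcongr
        exact sum_Icc_le_sum_dyadic
          (fun n ↦ sum_nonneg fun m _ ↦ shiftedPrimeWeight_nonneg k m n) X
    _ ≤ 2 * ∑ _j ∈ range (Nat.log 2 X + 1), C * eulerFactor 1 k := by
        gcongr
        exact hdyadic k _ hk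
    _ = 2 * C * eulerFactor 1 k * (Nat.log 2 X + 1) := by
        rw [sum_const, card_range, nsmul_eq_mul, Nat.cast_succ]
        ring

theorem eulerFactor_mul_shiftedPrimeWeight {d : ℕ} (hd : d ≠ 0) (n : ℕ) :
    eulerFactor 1 d * shiftedPrimeWeight 1 d n = ∑ k ∈ d.divisors with Squarefree k,
      primeWeight 1 k / k * shiftedPrimeWeight k (d / k) n := by
  rw [eulerFactor_eq_sum_divisors hd, sum_mul]
  refine sum_congr rfl fun k hk ↦ ?_
  rw [shiftedPrimeWeight_one_eq_of_dvd (Nat.dvd_of_mem_divisors (mem_filter.1 hk).1)]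
  ring

theorem exists_sum_eulerFactor_mul_shiftedPrimeWeight_le : ∃ C : ℝ, 0 < C ∧ ∀ X : ℕ,
    ∑ d ∈ Icc 1 X, ∑ a ∈ Icc 1 X, eulerFactor 1 d * shiftedPrimeWeight 1 d a
      ≤ C * (Nat.log 2 X + 1) := by
  obtain ⟨C, hC, hpairs⟩ := exists_sum_shiftedPrimeWeight_le
  refine ⟨C * exp 4, by positivity, fun X ↦ ?_⟩
  set F : ℕ → ℕ → ℝ := fun k m ↦
    primeWeight 1 k / k * ∑ a ∈ Icc 1 X, shiftedPrimeWeight k m a with hF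
  have hweight : ∀ k, 0 ≤ primeWeight 1 k / k := fun k ↦
    div_nonneg (primeWeight_nonneg zero_le_one k) k.cast_nonneg
  have hF0 : ∀ k m, 0 ≤ F k m := fun k m ↦
    mul_nonneg (hweight k) (sum_nonneg fun a _ ↦ shiftedPrimeWeight_nonneg k m a)
  calc ∑ d ∈ Icc 1 X, ∑ a ∈ Icc 1 X, eulerFactor 1 d * shiftedPrimeWeight 1 d a
      = ∑ d ∈ Icc 1 X, ∑ k ∈ d.divisors with Squarefree k, F k (d / k) := by
        refine sum_congr rfl fun d hd ↦ ?_
        have hd0 : d ≠ 0 := Nat.one_le_iff_ne_zero.1 (mem_Icc.1 hd).1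
        simp only [hF, mul_sum, eulerFactor_mul_shiftedPrimeWeight hd0]
        exact sum_comm
    _ ≤ ∑ k ∈ Icc 1 X with Squarefree k, ∑ m ∈ Icc 1 X, F k m :=
        sum_sum_squarefree_divisors_le hF0 X
    _ ≤ ∑ k ∈ Icc 1 X with Squarefree k, C * (Nat.log 2 X + 1) * (primeWeight 2 k / k) := by
        refine sum_le_sum fun k hk ↦ ?_
        have hk1 := (mem_Icc.1 (mem_filter.1 hk).1).1
        have hGk : primeWeight 1 k * eulerFactor 1 k ≤ primeWeight 2 k := by
          have := primeWeight_mul_eulerFactor_le zero_le_one zero_le_one k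
          rwa [one_mul, one_add_one_eq_two] at this
        calc ∑ m ∈ Icc 1 X, F k m
            ≤ primeWeight 1 k / k * (C * eulerFactor 1 k * (Nat.log 2 X + 1)) := by
              rw [← mul_sum]
              exact mul_le_mul_of_nonneg_left (hpairs k X hk1) (hweight k)
          _ = C * (Nat.log 2 X + 1) * (primeWeight 1 k * eulerFactor 1 k / k) := by ring
          _ ≤ C * (Nat.log 2 X + 1) * (primeWeight 2 k / k) := by gcongr
    _ ≤ C * (Nat.log 2 X + 1) * exp 4 := by
        rw [← mul_sum]
        have := sum_primeWeight_div_le zero_le_two X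
        rw [two_mul, two_add_two_eq_four] at this
        gcongr
    _ = C * exp 4 * (Nat.log 2 X + 1) := by ring

end ShiftedPrimes

section PrimePairs

open Finset

/-- The pairs of primes counted by `S_2(X)`; both are at most `X + 1`, as `p - 1` divides the
least common multiple. -/
def primeLcmPairs (X : ℕ) : Finset (ℕ × ℕ) :=
  {z ∈ Icc 1 (X + 1) ×ˢ Icc 1 (X + 1) |
    z.1.Prime ∧ z.2.Prime ∧ (z.1 - 1).lcm (z.2 - 1) ≤ X}

theorem swap_mem_primeLcmPairs {X : ℕ} {z : ℕ × ℕ} (hz : z ∈ primeLcmPairs X) :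
    z.swap ∈ primeLcmPairs X := by
  obtain ⟨hmem, hp, hq, hlcm⟩ := mem_filter.1 hz
  obtain ⟨hpX, hqX⟩ := mem_product.1 hmem
  exact mem_filter.2 ⟨mem_product.2 ⟨hqX, hpX⟩, hq, hp, (Nat.lcm_comm _ _).trans_le hlcm⟩

theorem card_le_two_mul_card_filter_lt_add {N : ℕ} {S : Finset (ℕ × ℕ)}
    (hswap : ∀ z ∈ S, z.swap ∈ S) (hN : ∀ z ∈ S, z.1 ∈ Icc 1 N) :
    #S ≤ 2 * #{z ∈ S | z.1 < z.2} + N := by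
  set L := {z ∈ S | z.1 < z.2}
  have hsub : S ⊆ L ∪ L.image Prod.swap ∪ (Icc 1 N).image fun n ↦ (n, n) := by
    rintro ⟨p, q⟩ hz
    rcases lt_trichotomy p q with hlt | rfl | hlt
    · exact mem_union_left _ (mem_union_left _ (mem_filter.2 ⟨hz, hlt⟩))
    · exact mem_union_right _ (mem_image_of_mem _ (hN _ hz))
    · exact mem_union_left _ (mem_union_right _
        (mem_image.2 ⟨(q, p), mem_filter.2 ⟨hswap _ hz, hlt⟩, rfl⟩))
  calc #S ≤ #L + #(L.image Prod.swap) + #((Icc 1 N).image fun n ↦ (n, n)) :=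
        (card_le_card hsub).trans ((card_union_le _ _).trans
          (Nat.add_le_add_right (card_union_le _ _) _))
    _ ≤ #L + #L + #(Icc 1 N) :=
        Nat.add_le_add (Nat.add_le_add_left card_image_le _) card_image_le
    _ = 2 * #L + N := by rw [Nat.card_Icc, Nat.add_sub_cancel, two_mul]

theorem exists_mul_add_one_of_lt {p q : ℕ} (hp : 1 < p) (hpq : p < q) :
    ∃ d a b : ℕ, 1 ≤ d ∧ 1 ≤ a ∧ a < b ∧ p = d * a + 1 ∧ q = d * b + 1 ∧
      (p - 1).lcm (q - 1) = d * a * b := by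
  obtain ⟨a, b, hcoprime, ha, hb⟩ := Nat.exists_coprime (p - 1) (q - 1)
  set d := (p - 1).gcd (q - 1)
  have hd : 1 ≤ d := Nat.gcd_pos_of_pos_left _ (by omega)
  have ha0 : a ≠ 0 := by rintro rfl; omega
  have hab : a < b := Nat.lt_of_mul_lt_mul_right (a := d) (by omega)
  refine ⟨d, a, b, hd, Nat.one_le_iff_ne_zero.2 ha0, hab, by rw [mul_comm]; omega,
    by rw [mul_comm]; omega, ?_⟩
  rw [ha, hb, Nat.lcm_mul_right, hcoprime.lcm_eq_mul, mul_comm, mul_assoc]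

/-- The pairs `a < b` up to `X`. -/
def ltPairs (X : ℕ) : Finset (ℕ × ℕ) := {z ∈ Icc 1 X ×ˢ Icc 1 X | z.1 < z.2}

/-- The pairs `d, a` up to `X` for which `d * a + 1` is prime. -/
def shiftedPrimePairs (X : ℕ) : Finset (ℕ × ℕ) :=
  {z ∈ Icc 1 X ×ˢ Icc 1 X | (z.1 * z.2 + 1).Prime}

theorem mem_Icc_of_mul_mul_le {d a b X : ℕ} (hd : 1 ≤ d) (ha : 1 ≤ a) (hb : 1 ≤ b)
    (hX : d * a * b ≤ X) : d ∈ Icc 1 X ∧ a ∈ Icc 1 X ∧ b ∈ Icc 1 X := by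
  have hda : d ≤ d * a := Nat.le_mul_of_pos_right d ha
  have had : a ≤ d * a := Nat.le_mul_of_pos_left a hd
  have hdab : d * a ≤ d * a * b := Nat.le_mul_of_pos_right _ hb
  have hbda : b ≤ d * a * b := Nat.le_mul_of_pos_left b (hd.trans hda)
  simp only [mem_Icc]
  omega

theorem card_filter_lt_primeLcmPairs_le (X : ℕ) :
    #{z ∈ primeLcmPairs X | z.1 < z.2} ≤
      ∑ z ∈ ltPairs X, #(cofactors {z.1, z.2} z.1 z.2 X) +
        ∑ z ∈ shiftedPrimePairs X, #(cofactors {z.1} z.1 z.2 X) := by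
  have hsub : {z ∈ primeLcmPairs X | z.1 < z.2} ⊆
      ((ltPairs X).biUnion fun z ↦
        (cofactors {z.1, z.2} z.1 z.2 X).image fun d ↦ (d * z.1 + 1, d * z.2 + 1)) ∪
      (shiftedPrimePairs X).biUnion fun z ↦
        (cofactors {z.1} z.1 z.2 X).image fun b ↦ (z.1 * z.2 + 1, z.1 * b + 1) := by
    rintro ⟨p, q⟩ hz
    obtain ⟨hmem, hlt⟩ := mem_filter.1 hz
    obtain ⟨-, hp, hq, hlcm⟩ := mem_filter.1 hmem
    obtain ⟨d, a, b, hd, ha, hab, rfl, rfl, hdab⟩ := exists_mul_add_one_of_lt hp.one_lt hlt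
    have hX : d * a * b ≤ X := hdab ▸ hlcm
    obtain ⟨hdX, haX, hbX⟩ := mem_Icc_of_mul_mul_le hd ha (ha.trans hab.le) hX
    simp only [mem_union, mem_biUnion, mem_image, ltPairs, shiftedPrimePairs, mem_filter,
      mem_product, mem_cofactors, mem_insert, mem_singleton]
    rcases le_or_gt b d with hbd | hdb
    · refine Or.inl ⟨(a, b), ⟨⟨haX, hbX⟩, hab⟩, d, ⟨hdX, ?_, by omega, hbd, ?_⟩, rfl⟩
      · rwa [mul_comm, ← mul_assoc]
      · rintro t (rfl | rfl)
        · rwa [mul_comm]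
        · rwa [mul_comm]
    · refine Or.inr ⟨(d, a), ⟨⟨hdX, haX⟩, hp⟩, b, ⟨hbX, hX, hdb.le, hab.le, ?_⟩, rfl⟩
      rintro t rfl
      exact hq
  refine (card_le_card hsub).trans ((card_union_le _ _).trans (Nat.add_le_add ?_ ?_)) <;>
    exact card_biUnion_le.trans (sum_le_sum fun z _ ↦ card_image_le)

theorem one_add_log_le {X : ℕ} (hX : 2 ≤ X) : 1 + log X ≤ 3 * log X := by
  have : log 2 ≤ log X := log_le_log two_pos (by exact_mod_cast hX)
  linarith [log_two_gt_d9]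

theorem natLog_two_add_one_le {X : ℕ} (hX : 2 ≤ X) : (Nat.log 2 X : ℝ) + 1 ≤ 4 * log X := by
  have hpow : (2 : ℝ) ^ Nat.log 2 X ≤ X := by
    exact_mod_cast Nat.pow_log_le_self 2 (by omega : X ≠ 0)
  have hlog := log_le_log (by positivity) hpow
  rw [log_pow] at hlog
  have : log 2 ≤ log X := log_le_log two_pos (by exact_mod_cast hX)
  nlinarith [log_two_gt_d9, (Nat.log 2 X).cast_nonneg (α := ℝ)]

theorem log_pos_of_two_le {X : ℕ} (hX : 2 ≤ X) : 0 < log X :=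
  log_pos (by exact_mod_cast hX)

theorem exists_sum_card_cofactors_ltPairs_le : ∃ C : ℝ, 0 < C ∧ ∀ X : ℕ, 2 ≤ X →
    ∑ z ∈ ltPairs X, (#(cofactors {z.1, z.2} z.1 z.2 X) : ℝ) ≤ C * X := by
  obtain ⟨C, hC, hcard⟩ := exists_card_cofactors_le 2
  refine ⟨C * (exp (2 * ((1 + 2) ^ 3 - 1)) * 9), by positivity, fun X hX ↦ ?_⟩
  have hlog := log_pos_of_two_le hX
  refine le_of_mul_le_mul_right ?_ (pow_pos hlog 2)
  calc (∑ z ∈ ltPairs X, (#(cofactors {z.1, z.2} z.1 z.2 X) : ℝ)) * log X ^ 2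
      ≤ ∑ z ∈ ltPairs X, C * X * (eulerFactor 2 (z.1 * z.2 * (z.2 - z.1)) / (z.1 * z.2)) := by
        rw [sum_mul]
        refine sum_le_sum fun ⟨a, b⟩ hz ↦ ?_
        obtain ⟨hmem, hab : a < b⟩ := mem_filter.1 hz
        have ha : 1 ≤ a := (mem_Icc.1 (mem_product.1 hmem).1).1
        have hdvda : a ∣ a * b * (b - a) := Dvd.intro _ (mul_assoc _ _ _).symm
        have hdvdb : b ∣ a * b * (b - a) := (Dvd.intro_left a rfl).mul_right _
        refine hcard {a, b} (a * b * (b - a)) a b X (card_pair hab.ne) ?_ ?_ ?_ ha (by omega)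
        · exact mul_ne_zero (mul_ne_zero (by omega) (by omega)) (by omega)
        · simp [hdvda, hdvdb]
        · simp [hab.not_gt]
    _ = C * X * ∑ z ∈ ltPairs X, eulerFactor 2 (z.1 * z.2 * (z.2 - z.1)) / (z.1 * z.2) :=
        (mul_sum _ _ _).symm
    _ ≤ C * X * (exp (2 * ((1 + 2) ^ 3 - 1)) * (3 * log X) ^ 2) := by
        gcongr
        refine (sum_lt_eulerFactor_div_mul_le zero_le_two X).trans ?_
        gcongr
        exact one_add_log_le hX
    _ = C * (exp (2 * ((1 + 2) ^ 3 - 1)) * 9) * X * log X ^ 2 := by ring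

theorem exists_sum_card_cofactors_shiftedPrimePairs_le : ∃ C : ℝ, 0 < C ∧ ∀ X : ℕ, 2 ≤ X →
    ∑ z ∈ shiftedPrimePairs X, (#(cofactors {z.1} z.1 z.2 X) : ℝ) ≤ C * X := by
  obtain ⟨C, hC, hcard⟩ := exists_card_cofactors_le 1
  obtain ⟨K, hK, hpairs⟩ := exists_sum_eulerFactor_mul_shiftedPrimeWeight_le
  refine ⟨C * (K * 4), by positivity, fun X hX ↦ ?_⟩
  refine le_of_mul_le_mul_right ?_ (log_pos_of_two_le hX)
  calc (∑ z ∈ shiftedPrimePairs X, (#(cofactors {z.1} z.1 z.2 X) : ℝ)) * log X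
      ≤ ∑ z ∈ shiftedPrimePairs X, C * X * (eulerFactor 1 z.1 / (z.1 * z.2)) := by
        rw [sum_mul]
        refine sum_le_sum fun ⟨d, a⟩ hz ↦ ?_
        obtain ⟨hd, ha⟩ := mem_product.1 (mem_filter.1 hz).1
        have hd1 : 1 ≤ d := (mem_Icc.1 hd).1
        simpa using hcard {d} d d a X (card_singleton d) (by omega) (by simp) (by simp) hd1
          (mem_Icc.1 ha).1
    _ = C * X * ∑ d ∈ Icc 1 X, ∑ a ∈ Icc 1 X, eulerFactor 1 d * shiftedPrimeWeight 1 d a := by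
        rw [← mul_sum, shiftedPrimePairs, sum_filter, sum_product]
        simp only [shiftedPrimeWeight, one_mul, mul_ite, mul_one_div, mul_zero]
    _ ≤ C * X * (K * (4 * log X)) := by
        gcongr
        refine (hpairs X).trans ?_
        gcongr
        exact natLog_two_add_one_le hX
    _ = C * (K * 4) * X * log X := by ring

theorem exists_card_primeLcmPairs_le : ∃ C : ℝ, 0 < C ∧ ∀ X : ℕ, 2 ≤ X →
    #(primeLcmPairs X) ≤ C * X := by
  obtain ⟨C, hC, hlt⟩ := exists_sum_card_cofactors_ltPairs_le
  obtain ⟨K, hK, hshift⟩ := exists_sum_card_cofactors_shiftedPrimePairs_le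
  refine ⟨2 * (C + K) + 2, by positivity, fun X hX ↦ ?_⟩
  have hdiag : #(primeLcmPairs X) ≤ 2 * #{z ∈ primeLcmPairs X | z.1 < z.2} + (X + 1) :=
    card_le_two_mul_card_filter_lt_add (fun z hz ↦ swap_mem_primeLcmPairs hz)
      fun z hz ↦ (mem_product.1 (mem_filter.1 hz).1).1
  have hcard : (#(primeLcmPairs X) : ℝ) ≤ 2 * (∑ z ∈ ltPairs X, #(cofactors {z.1, z.2} z.1 z.2 X) +
      ∑ z ∈ shiftedPrimePairs X, #(cofactors {z.1} z.1 z.2 X)) + (X + 1) := by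
    have := card_filter_lt_primeLcmPairs_le X
    exact_mod_cast hdiag.trans (by omega)
  push_cast at hcard
  have hX1 : (1 : ℝ) ≤ X := by exact_mod_cast (by omega : 1 ≤ X)
  linarith [hlt X hX, hshift X hX]

end PrimePairs

theorem S2_upper_bound :
    ∃ C : ℝ, C > 0 ∧ ∀ x : ℝ, x ≥ 2 →
      (((Finset.Icc 1 (⌊x⌋₊ + 1) ×ˢ Finset.Icc 1 (⌊x⌋₊ + 1)).filter
          (fun pq : ℕ × ℕ => pq.1.Prime ∧ pq.2.Prime ∧
            (Nat.lcm (pq.1 - 1) (pq.2 - 1) : ℝ) ≤ x)).card : ℝ)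
        ≤ C * x := by
  obtain ⟨C, hC, hpairs⟩ := exists_card_primeLcmPairs_le
  refine ⟨C, hC, fun x hx ↦ ?_⟩
  have hX : 2 ≤ ⌊x⌋₊ := Nat.le_floor hx
  refine le_trans ?_ ((hpairs ⌊x⌋₊ hX).trans
    (mul_le_mul_of_nonneg_left (Nat.floor_le (by linarith)) hC.le))
  gcongr
  intro z hz
  obtain ⟨hmem, hp, hq, hlcm⟩ := Finset.mem_filter.1 hz
  exact Finset.mem_filter.2 ⟨hmem, hp, hq, Nat.le_floor hlcm⟩
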